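/- arXiv:2407.19693 — 7 statements merged into one kernel-verified Lean document; each statement's English description precedes it below -/
import Mathlib

section
/- For every integer d ≥ 2 there exists N such that for all n ≥ N the following holds: if F is a family of m ≥ 1 distinct d-element subsets of [n] = {1,…,n}, then F has a transversal of size at most n + 1 − (1/e)·n·m^{−1/d}; that is, T(F) ≤ n + 1 − (1/e)·n·m^{−1/d}. -/
/-- `S` is a transversal of the family `F` of subsets of `[n] = {1,…,n}`:
`S ⊆ [n]` and `S` meets every member of `F`. -/
def IsTransversal (n : ℕ) (F : Finset (Finset ℕ)) (S : Finset ℕ) : Prop :=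
  S ⊆ Finset.Icc 1 n ∧ ∀ e ∈ F, (S ∩ e).Nonempty

/-- The transversal number of `F`: the minimum cardinality of a transversal. -/
noncomputable def transversalNumber (n : ℕ) (F : Finset (Finset ℕ)) : ℕ :=
  sInf {c : ℕ | ∃ S : Finset ℕ, IsTransversal n F S ∧ S.card = c}

/-!
Take a random `U ⊆ [n]` containing each point independently with probability `p`. The points
outside `U`, together with one point from each edge contained in `U`, form a transversal, so
`T(F) ≤ n - |U| + |{e ∈ F | e ⊆ U}|`, whose right-hand side has mean `(1 - p) n + ∑ e ∈ F, p ^ |e|`.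
With `p = m ^ (-1/d)` and edges of size at least `d`, the last sum is at most `m p ^ d = 1`.
-/

section RandomSubset

open Finset

variable {α ι : Type*}

lemma sum_Icc_pow_card_mul_pow [DecidableEq α] {R : Type*} [CommSemiring R] (a b : R)
    {s t : Finset α} (hst : s ⊆ t) :
    ∑ u ∈ Icc s t, a ^ #u * b ^ (#t - #u) = a ^ #s * (a + b) ^ (#t - #s) := by
  have disjoint_of_mem {v : Finset α} (hv : v ∈ (t \ s).powerset) : Disjoint s v :=
    disjoint_sdiff.mono_right (mem_powerset.1 hv)
  have union_injOn : Set.InjOn (s ∪ ·) (t \ s).powerset := by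
    simpa only [union_comm s] using (disjoint_injOn_union_left s).mono fun _ ↦ disjoint_of_mem
  rw [Icc_eq_image_powerset hst, sum_image union_injOn, ← card_sdiff_of_subset hst,
    ← sum_pow_mul_eq_add_pow, mul_sum]
  refine sum_congr rfl fun v hv ↦ ?_
  rw [card_union_of_disjoint (disjoint_of_mem hv), card_sdiff_of_subset hst, pow_add,
    Nat.sub_add_eq, mul_assoc]

/-- The probability that the random subset of `A` containing each point independently with
probability `p` equals `U`. It has this meaning only for `U ⊆ A`, since the subtraction in the
exponent is truncated. -/
def bernoulliWeight (A : Finset α) (p : ℝ) (U : Finset α) : ℝ :=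
  p ^ #U * (1 - p) ^ (#A - #U)

variable {A : Finset α} {p : ℝ}

lemma bernoulliWeight_nonneg (hp : p ∈ Set.Icc 0 1) (U : Finset α) : 0 ≤ bernoulliWeight A p U :=
  mul_nonneg (pow_nonneg hp.1 _) (pow_nonneg (sub_nonneg.2 hp.2) _)

lemma sum_powerset_bernoulliWeight (A : Finset α) (p : ℝ) :
    ∑ U ∈ A.powerset, bernoulliWeight A p U = 1 := by
  simp only [bernoulliWeight, sum_pow_mul_eq_add_pow, add_sub_cancel, one_pow]

lemma sum_bernoulliWeight_of_subset [DecidableEq α] {s : Finset α} (hs : s ⊆ A) :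
    ∑ U ∈ A.powerset with s ⊆ U, bernoulliWeight A p U = p ^ #s := by
  have filter_eq_Icc : {U ∈ A.powerset | s ⊆ U} = Icc s A := by
    ext U
    simp [and_comm]
  simp only [filter_eq_Icc, bernoulliWeight, sum_Icc_pow_card_mul_pow _ _ hs, add_sub_cancel,
    one_pow, mul_one]

lemma sum_bernoulliWeight_mul_card_filter_subset [DecidableEq α] {I : Finset ι}
    {s : ι → Finset α} (hs : ∀ i ∈ I, s i ⊆ A) :
    ∑ U ∈ A.powerset, bernoulliWeight A p U * #{i ∈ I | s i ⊆ U} = ∑ i ∈ I, p ^ #(s i) := by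
  simp only [natCast_card_filter, mul_sum, mul_ite, mul_one, mul_zero]
  rw [sum_comm]
  refine sum_congr rfl fun i hi ↦ ?_
  rw [← sum_filter, sum_bernoulliWeight_of_subset (hs i hi)]

lemma sum_bernoulliWeight_mul_card :
    ∑ U ∈ A.powerset, bernoulliWeight A p U * #U = #A * p := by
  classical
  calc
    _ = ∑ U ∈ A.powerset, bernoulliWeight A p U * #{x ∈ A | {x} ⊆ U} := by
      refine sum_congr rfl fun U hU ↦ ?_
      simp only [singleton_subset_iff, filter_mem_eq_inter, inter_eq_right.2 (mem_powerset.1 hU)]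
    _ = ∑ x ∈ A, p ^ #{x} :=
      sum_bernoulliWeight_mul_card_filter_subset fun x hx ↦ singleton_subset_iff.2 hx
    _ = #A * p := by simp

lemma exists_subset_sum_bernoulliWeight_mul_le (hp : p ∈ Set.Icc 0 1) (f : Finset α → ℝ) :
    ∃ U ⊆ A, ∑ V ∈ A.powerset, bernoulliWeight A p V * f V ≤ f U := by
  have total := sum_powerset_bernoulliWeight A p
  obtain ⟨U, hU, hle⟩ := (convexOn_id convex_univ).exists_ge_of_centerMass (p := f)
    (fun V _ ↦ bernoulliWeight_nonneg hp V) (total ▸ one_pos) (fun V _ ↦ Set.mem_univ (f V))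
  rw [centerMass_eq_of_sum_1 _ _ total] at hle
  exact ⟨U, mem_powerset.1 hU, hle⟩

lemma exists_subset_card_mul_sub_sum_pow_le [DecidableEq α] (hp : p ∈ Set.Icc 0 1)
    {I : Finset ι} {s : ι → Finset α} (hs : ∀ i ∈ I, s i ⊆ A) :
    ∃ U ⊆ A, #A * p - ∑ i ∈ I, p ^ #(s i) ≤ (#U : ℝ) - #{i ∈ I | s i ⊆ U} := by
  simpa only [mul_sub, sum_sub_distrib, sum_bernoulliWeight_mul_card,
    sum_bernoulliWeight_mul_card_filter_subset hs] using
    exists_subset_sum_bernoulliWeight_mul_le (A := A) hp fun U ↦ (#U : ℝ) - #{i ∈ I | s i ⊆ U}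

end RandomSubset

section Transversal

open Finset

variable {n : ℕ} {F : Finset (Finset ℕ)}

lemma transversalNumber_le_card {S : Finset ℕ} (hS : IsTransversal n F S) :
    transversalNumber n F ≤ #S :=
  Nat.sInf_le ⟨S, hS, rfl⟩

lemma exists_isTransversal_card_le (hF : ∀ e ∈ F, e ⊆ Icc 1 n ∧ e.Nonempty) :
    ∃ S, IsTransversal n F S ∧ #S ≤ #F := by
  choose point point_mem using fun e : F ↦ (hF e e.2).2
  refine ⟨F.attach.image point, ⟨image_subset_iff.2 fun e _ ↦ (hF e e.2).1 (point_mem e),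
    fun e he ↦ ⟨point ⟨e, he⟩, mem_inter.2 ⟨?_, point_mem ⟨e, he⟩⟩⟩⟩, ?_⟩
  · exact mem_image_of_mem point (mem_attach F ⟨e, he⟩)
  · exact card_image_le.trans_eq card_attach

lemma IsTransversal.sdiff_union {U S : Finset ℕ} (hF : ∀ e ∈ F, e ⊆ Icc 1 n)
    (hS : IsTransversal n {e ∈ F | e ⊆ U} S) : IsTransversal n F (Icc 1 n \ U ∪ S) := by
  refine ⟨union_subset sdiff_subset hS.1, fun e he ↦ ?_⟩
  by_cases heU : e ⊆ U
  · exact (hS.2 e (mem_filter.2 ⟨he, heU⟩)).mono (inter_subset_inter_right subset_union_right)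
  · obtain ⟨x, hxe, hxU⟩ := not_subset.1 heU
    exact ⟨x, mem_inter.2 ⟨mem_union_left S (mem_sdiff.2 ⟨hF e he hxe, hxU⟩), hxe⟩⟩

lemma transversalNumber_add_card_le {U : Finset ℕ} (hF : ∀ e ∈ F, e ⊆ Icc 1 n ∧ e.Nonempty)
    (hU : U ⊆ Icc 1 n) : transversalNumber n F + #U ≤ n + #{e ∈ F | e ⊆ U} := by
  obtain ⟨S, hS, hS_card⟩ :=
    exists_isTransversal_card_le fun e (he : e ∈ {e ∈ F | e ⊆ U}) ↦ hF e (mem_filter.1 he).1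
  calc
    transversalNumber n F + #U ≤ #(Icc 1 n \ U ∪ S) + #U := by
      gcongr
      exact transversalNumber_le_card (hS.sdiff_union fun e he ↦ (hF e he).1)
    _ ≤ #(Icc 1 n \ U) + #S + #U := by
      gcongr
      exact card_union_le _ _
    _ = n + #S := by
      rw [add_right_comm, card_sdiff_add_card_eq_card hU, Nat.card_Icc, Nat.add_sub_cancel]
    _ ≤ n + #{e ∈ F | e ⊆ U} := by gcongr

theorem transversalNumber_le_sub_add_sum_pow {p : ℝ} (hp : p ∈ Set.Icc 0 1)
    (hF : ∀ e ∈ F, e ⊆ Icc 1 n ∧ e.Nonempty) :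
    (transversalNumber n F : ℝ) ≤ n - n * p + ∑ e ∈ F, p ^ #e := by
  obtain ⟨U, hU, moment⟩ :=
    exists_subset_card_mul_sub_sum_pow_le hp (s := id) fun e he ↦ (hF e he).1
  have alteration : (transversalNumber n F : ℝ) + #U ≤ n + #{e ∈ F | e ⊆ U} :=
    mod_cast transversalNumber_add_card_le hF hU
  simp only [Nat.card_Icc, Nat.add_sub_cancel, id_eq] at moment
  linarith

theorem stmt_0_general {d : ℕ} (hd : d ≠ 0) (hF : ∀ e ∈ F, e ⊆ Icc 1 n ∧ d ≤ #e)
    (hne : F.Nonempty) :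
    (transversalNumber n F : ℝ) ≤ n + 1 - n * (#F : ℝ) ^ (-(1 / (d : ℝ))) := by
  set p : ℝ := (#F : ℝ) ^ (-(1 / (d : ℝ))) with p_def
  have hp : p ∈ Set.Icc 0 1 := ⟨by positivity, Real.rpow_le_one_of_one_le_of_nonpos
    (mod_cast hne.card_pos) (neg_nonpos.2 (by positivity))⟩
  have p_pow : p ^ d = (#F : ℝ)⁻¹ := by
    rw [p_def, Real.rpow_neg (by positivity), inv_pow, one_div,
      Real.rpow_inv_natCast_pow (by positivity) hd]
  have sum_le_one : ∑ e ∈ F, p ^ #e ≤ 1 := calc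
    ∑ e ∈ F, p ^ #e ≤ ∑ _e ∈ F, p ^ d :=
      sum_le_sum fun e he ↦ pow_le_pow_of_le_one hp.1 hp.2 (hF e he).2
    _ = 1 := by
      rw [sum_const, nsmul_eq_mul, p_pow, mul_inv_cancel₀ (mod_cast hne.card_ne_zero)]
  have edges_nonempty : ∀ e ∈ F, e ⊆ Icc 1 n ∧ e.Nonempty := fun e he ↦
    ⟨(hF e he).1, card_pos.1 (hd.bot_lt.trans_le (hF e he).2)⟩
  linarith [transversalNumber_le_sub_add_sum_pow hp edges_nonempty]

end Transversal

theorem stmt_0 (d : ℕ) (hd : 2 ≤ d) :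
    ∃ N : ℕ, ∀ n : ℕ, N ≤ n →
      ∀ F : Finset (Finset ℕ), (∀ e ∈ F, e ⊆ Finset.Icc 1 n ∧ e.card = d) →
        F.Nonempty →
        (transversalNumber n F : ℝ) ≤
          (n : ℝ) + 1 - (1 / Real.exp 1) * (n : ℝ) * (F.card : ℝ) ^ (-(1 / (d : ℝ))) := by
  refine ⟨0, fun n _ F hF hne ↦ ?_⟩
  have inv_exp_le_one : 1 / Real.exp 1 ≤ 1 :=
    (div_le_one (Real.exp_pos 1)).2 (Real.one_le_exp zero_le_one)
  calc
    (transversalNumber n F : ℝ) ≤ n + 1 - 1 * n * (F.card : ℝ) ^ (-(1 / (d : ℝ))) := by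
      rw [one_mul]
      exact stmt_0_general (by lia) (fun e he ↦ ⟨(hF e he).1, (hF e he).2.ge⟩) hne
    _ ≤ n + 1 - (1 / Real.exp 1) * n * (F.card : ℝ) ^ (-(1 / (d : ℝ))) := by gcongr
end

section
/- For every integer d ≥ 2 there exists a constant c_d > 0 such that every pure (d−1)-dimensional Eulerian simplicial complex Δ with n vertices satisfies: T(Δ) ≤ n − c_d·n^{1/2} if d is even, and T(Δ) ≤ n − c_d·n^{(d+1)/(2d)} if d is odd. -/
/-- `F` is a facet (maximal face) of the complex `Δ`. -/
def IsFacetOf (Δ : Finset (Finset ℕ)) (F : Finset ℕ) : Prop :=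
  F ∈ Δ ∧ ∀ G ∈ Δ, F ⊆ G → G = F

/-- The link of a face `F` in `Δ`: `{G ∈ Δ : F ∩ G = ∅ and F ∪ G ∈ Δ}`. -/
def linkOf (Δ : Finset (Finset ℕ)) (F : Finset ℕ) : Finset (Finset ℕ) :=
  Δ.filter fun G => F ∩ G = ∅ ∧ F ∪ G ∈ Δ

/-- Reduced Euler characteristic: `χ̃(Γ) = -1 + ∑_{i ≥ 0} (-1)^i f_i(Γ)`, where `f_i`
counts faces with `i+1` elements. -/
def reducedEuler (Γ : Finset (Finset ℕ)) : ℤ :=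
  -1 + ∑ F ∈ Γ.filter (fun F => F.Nonempty), (-1 : ℤ) ^ (F.card - 1)

/-- `Δ` is a pure `(d-1)`-dimensional simplicial complex on vertex set `V`:
faces lie in `V`, `Δ` is closed under inclusion, every vertex is a face,
and every facet has `d` elements. -/
def IsPureComplex (V : Finset ℕ) (d : ℕ) (Δ : Finset (Finset ℕ)) : Prop :=
  (∀ F ∈ Δ, F ⊆ V) ∧ (∀ F ∈ Δ, ∀ G, G ⊆ F → G ∈ Δ) ∧ (∀ v ∈ V, {v} ∈ Δ) ∧
    (∀ F, IsFacetOf Δ F → F.card = d)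

/-- `Δ` is Eulerian: `χ̃(lk(F,Δ)) = (-1)^(d - |F| - 1)` for every face `F ∈ Δ`. -/
def IsEulerian (d : ℕ) (Δ : Finset (Finset ℕ)) : Prop :=
  ∀ F ∈ Δ, (reducedEuler (linkOf Δ F) : ℚ) = (-1 : ℚ) ^ ((d : ℤ) - (F.card : ℤ) - 1)

/-- The transversal number of the complex `Δ` on vertex set `V`: the minimum size of a
subset of `V` meeting every facet of `Δ`. -/
noncomputable def complexTransversalNumber (V : Finset ℕ) (Δ : Finset (Finset ℕ)) : ℕ :=
  sInf {c : ℕ | ∃ S : Finset ℕ, S ⊆ V ∧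
    (∀ F, IsFacetOf Δ F → (S ∩ F).Nonempty) ∧ S.card = c}

/-!
Write `n` for the number of vertices and `f i` for the number of faces with `i` elements. For an
Eulerian complex the polynomial `p = ∑ f i X ^ i` satisfies `p(-1 - x) = (-1) ^ d p(x)` (the
Dehn–Sommerville relations). A polynomial of degree at most `d` with this symmetry and a zero of
order greater than `d / 2` at `0` has a zero of the same order at `-1`, hence vanishes. So
`f 0, …, f ⌊d / 2⌋` determine `f d` linearly, and the number of facets is `O(n ^ ⌊d / 2⌋)` since
`f i ≤ n ^ i`.

A random vertex set of size `k` contains at most `f d * (k / n) ^ d` facets on average, which is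
less than `1` for a suitable `k` of order `n ^ (1 - ⌊d / 2⌋ / d)`. The complement of a vertex set
containing no facet is a transversal.
-/

open Polynomial
open scoped Finset

section DehnSommerville

variable {R : Type*} [CommRing R]

theorem eq_zero_of_comp_neg_one_sub_X_dvd {p : R[X]} {m : ℕ} (hcomp : p.comp (-1 - X) ∣ p)
    (hX : X ^ m ∣ p) (hdeg : p.natDegree < 2 * m) : p = 0 := by
  nontriviality R
  have hX_add_one : (X + C 1) ^ m ∣ p := by
    have h : (-1 - X : R[X]) ^ m ∣ p :=
      (show _ ∣ p.comp (-1 - X) by simpa using map_dvd (compRingHom (-1 - X)) hX).trans hcomp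
    rw [show (-1 - X : R[X]) = -(X + C 1) by rw [C_1]; ring, neg_pow] at h
    exact dvd_of_mul_left_dvd h
  have hcoprime : IsCoprime ((X : R[X]) ^ m) ((X + C 1) ^ m) :=
    IsCoprime.pow ⟨-1, 1, by rw [C_1]; ring⟩
  have hmonic : (X ^ m * (X + C 1) ^ m : R[X]).Monic :=
    (monic_X_pow m).mul ((monic_X_add_C 1).pow m)
  by_contra hp
  refine hmonic.not_dvd_of_natDegree_lt hp ?_ (hcoprime.mul_dvd hX hX_add_one)
  rw [(monic_X_pow m).natDegree_mul ((monic_X_add_C 1).pow m), (monic_X_add_C 1).natDegree_pow,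
    natDegree_X_pow, natDegree_X_add_C]
  omega

variable (R) in
/-- The polynomials `p` of degree at most `d` satisfying the Dehn–Sommerville relations, encoded as
the functional equation `p(-1 - x) = (-1) ^ d p(x)`. -/
noncomputable def dehnSommerville (d : ℕ) : Submodule R R[X] :=
  degreeLE R d ⊓
    LinearMap.eqLocus (aeval (-1 - X)).toLinearMap ((-1 : R) ^ d • LinearMap.id)

theorem mem_dehnSommerville {d : ℕ} {p : R[X]} :
    p ∈ dehnSommerville R d ↔ p.degree ≤ d ∧ p.comp (-1 - X) = (-1 : R) ^ d • p := by
  simp [dehnSommerville, mem_degreeLE, LinearMap.mem_eqLocus, comp_eq_aeval]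

theorem eq_zero_of_mem_dehnSommerville {d : ℕ} {p : R[X]} (hp : p ∈ dehnSommerville R d)
    (hcoeff : ∀ i ≤ d / 2, p.coeff i = 0) : p = 0 := by
  obtain ⟨hdeg, hcomp⟩ := mem_dehnSommerville.1 hp
  refine eq_zero_of_comp_neg_one_sub_X_dvd (m := d / 2 + 1) ?_
    (X_pow_dvd_iff.2 fun i hi => hcoeff i (by omega)) ?_
  · rw [hcomp]
    exact ⟨(-1) ^ d, by rw [smul_eq_C_mul, mul_right_comm]; simp [← mul_pow]⟩
  · have := natDegree_le_of_degree_le hdeg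
    omega

theorem exists_coeff_eq_sum_of_mem_dehnSommerville (K : Type*) [Field K] (d j : ℕ) :
    ∃ c : Fin (d / 2 + 1) → K, ∀ p ∈ dehnSommerville K d, p.coeff j = ∑ i, c i * p.coeff i := by
  let coeffOn (i : ℕ) : dehnSommerville K d →ₗ[K] K := (lcoeff K i).domRestrict _
  have hker : ⨅ i : Fin (d / 2 + 1), (coeffOn i).ker ≤ (coeffOn j).ker := by
    intro p hp
    have hp0 : (p : K[X]) = 0 := eq_zero_of_mem_dehnSommerville p.2 fun i hi =>
      (Submodule.mem_iInf _).1 hp ⟨i, by omega⟩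
    simp [coeffOn, hp0]
  obtain ⟨c, hc⟩ := (Submodule.mem_span_range_iff_exists_fun K).1 (mem_span_of_iInf_ker_le_ker hker)
  exact ⟨c, fun p hp => by simpa [coeffOn] using (LinearMap.congr_fun hc ⟨p, hp⟩).symm⟩

end DehnSommerville

section FacePolynomial

variable {α R : Type*} [CommRing R]

variable (R) in
/-- The face polynomial `∑ F ∈ Δ, X ^ |F|` of a finite set family, whose `i`-th coefficient counts
the members with `i` elements (so it is the `f`-polynomial with the index shifted by one). -/
noncomputable def facePolynomial (Δ : Finset (Finset α)) : R[X] :=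
  ∑ F ∈ Δ, X ^ F.card

theorem coeff_facePolynomial (Δ : Finset (Finset α)) (i : ℕ) :
    (facePolynomial R Δ).coeff i = (Δ # i).card := by
  simp [facePolynomial, coeff_X_pow, Finset.slice, eq_comm]

theorem degree_facePolynomial_le {Δ : Finset (Finset α)} {d : ℕ} (hΔ : ∀ F ∈ Δ, F.card ≤ d) :
    (facePolynomial R Δ).degree ≤ d :=
  (degree_sum_le _ _).trans <| Finset.sup_le fun F hF =>
    (degree_X_pow_le F.card).trans (Nat.cast_le.2 (hΔ F hF))

theorem facePolynomial_comp_neg_one_sub_X [DecidableEq α] {Δ : Finset (Finset α)}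
    (hΔ : IsLowerSet (Δ : Set (Finset α))) :
    (facePolynomial R Δ).comp (-1 - X) =
      ∑ F ∈ Δ, ((∑ G ∈ Δ with F ⊆ G, (-1 : ℤ) ^ G.card : ℤ) : R) • (X : R[X]) ^ F.card := by
  have hpow (G : Finset α) :
      (-1 - X : R[X]) ^ G.card = ∑ F ∈ G.powerset, (-1) ^ G.card * X ^ F.card := by
    rw [← Finset.mul_sum, show (-1 - X : R[X]) = -1 * (X + 1) by ring, mul_pow,
      ← Finset.sum_pow_mul_eq_add_pow]
    simp
  calc (facePolynomial R Δ).comp (-1 - X)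
      = ∑ G ∈ Δ, ∑ F ∈ G.powerset, (-1 : R[X]) ^ G.card * X ^ F.card := by
        simp [facePolynomial, Polynomial.sum_comp, hpow]
    _ = ∑ F ∈ Δ, ∑ G ∈ Δ with F ⊆ G, (-1 : R[X]) ^ G.card * X ^ F.card := by
        refine Finset.sum_comm' fun G F => ?_
        simp only [Finset.mem_powerset, Finset.mem_filter]
        exact ⟨fun h => ⟨h, hΔ h.2 h.1⟩, fun h => h.1⟩
    _ = _ := by simp [Finset.sum_mul, smul_eq_C_mul]

end FacePolynomial

section Eulerian

variable {V : Finset ℕ} {d : ℕ} {Δ : Finset (Finset ℕ)}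

theorem reducedEuler_eq_neg_sum {Γ : Finset (Finset ℕ)} (hΓ : ∅ ∈ Γ) :
    reducedEuler Γ = -∑ F ∈ Γ, (-1 : ℤ) ^ F.card := by
  have hempty : Γ.filter (fun F => ¬F.Nonempty) = {∅} := by
    ext F
    simp only [Finset.mem_filter, Finset.not_nonempty_iff_eq_empty, Finset.mem_singleton]
    exact ⟨And.right, fun hF => ⟨hF ▸ hΓ, hF⟩⟩
  have hsign : ∑ F ∈ Γ with F.Nonempty, (-1 : ℤ) ^ F.card =
      -∑ F ∈ Γ with F.Nonempty, (-1 : ℤ) ^ (F.card - 1) := by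
    rw [← Finset.sum_neg_distrib]
    refine Finset.sum_congr rfl fun F hF => ?_
    rw [← mul_pow_sub_one (Finset.mem_filter.1 hF).2.card_ne_zero, neg_one_mul]
  rw [reducedEuler, ← Finset.sum_filter_add_sum_filter_not Γ Finset.Nonempty, hempty, hsign]
  simp

theorem sum_filter_superset_eq_sum_linkOf {M : Type*} [AddCommMonoid M]
    (hΔ : IsLowerSet (Δ : Set (Finset ℕ))) (F : Finset ℕ) (g : Finset ℕ → M) :
    ∑ G ∈ Δ with F ⊆ G, g G = ∑ G ∈ linkOf Δ F, g (F ∪ G) := by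
  symm
  refine Finset.sum_bij' (fun G _ => F ∪ G) (fun G _ => G \ F) ?_ ?_ ?_ ?_ fun _ _ => rfl
  all_goals simp only [linkOf, Finset.mem_filter]
  · exact fun G hG => ⟨hG.2.2, Finset.subset_union_left⟩
  · intro G hG
    refine ⟨hΔ Finset.sdiff_subset hG.1, Finset.inter_sdiff_self F G, ?_⟩
    rw [Finset.union_sdiff_of_subset hG.2]
    exact hG.1
  · exact fun G hG =>
      Finset.union_sdiff_cancel_left (Finset.disjoint_iff_inter_eq_empty.2 hG.2.1)
  · exact fun G hG => Finset.union_sdiff_of_subset hG.2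

theorem IsEulerian.sum_neg_one_pow_card (hE : IsEulerian d Δ)
    (hΔ : IsLowerSet (Δ : Set (Finset ℕ))) {F : Finset ℕ} (hF : F ∈ Δ) :
    ∑ G ∈ Δ with F ⊆ G, (-1 : ℤ) ^ G.card = (-1) ^ d := by
  have hlink : ∅ ∈ linkOf Δ F := by
    have hempty : ∅ ∈ Δ := hΔ (Finset.empty_subset F) hF
    simp [linkOf, hF, hempty]
  have hstar : ∑ G ∈ Δ with F ⊆ G, (-1 : ℤ) ^ G.card =
      -((-1) ^ F.card * reducedEuler (linkOf Δ F)) := by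
    rw [sum_filter_superset_eq_sum_linkOf hΔ, reducedEuler_eq_neg_sum hlink, mul_neg, neg_neg,
      Finset.mul_sum]
    refine Finset.sum_congr rfl fun G hG => ?_
    have hdisj : F ∩ G = ∅ := (Finset.mem_filter.1 hG).2.1
    rw [Finset.card_union_of_disjoint (Finset.disjoint_iff_inter_eq_empty.2 hdisj), pow_add]
  have hsign : (-1 : ℚ) ^ d = -((-1) ^ F.card * (-1) ^ ((d : ℤ) - F.card - 1)) := by
    rw [zpow_sub_one₀ (by norm_num), zpow_natCast_sub_natCast₀ (by norm_num)]
    field_simp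
  rw [← Int.cast_inj (α := ℚ), hstar]
  push_cast
  rw [hE F hF, hsign]

theorem IsPureComplex.isLowerSet (h : IsPureComplex V d Δ) :
    IsLowerSet (Δ : Set (Finset ℕ)) :=
  fun F G hGF hF => h.2.1 F hF G hGF

theorem IsPureComplex.card_le (h : IsPureComplex V d Δ) {F : Finset ℕ} (hF : F ∈ Δ) :
    F.card ≤ d := by
  obtain ⟨G, hFG, hG⟩ := Finset.exists_le_maximal Δ hF
  rw [← h.2.2.2 G ⟨hG.prop, fun K hK hGK => (hG.eq_of_le hK hGK).symm⟩]
  exact Finset.card_le_card hFG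

theorem IsPureComplex.slice_subset_powersetCard (h : IsPureComplex V d Δ) (i : ℕ) :
    Δ # i ⊆ V.powersetCard i := by
  intro F hF
  obtain ⟨hFΔ, hcard⟩ := Finset.mem_slice.1 hF
  exact Finset.mem_powersetCard.2 ⟨h.1 F hFΔ, hcard⟩

theorem IsPureComplex.card_slice_le_pow (h : IsPureComplex V d Δ) (i : ℕ) :
    (Δ # i).card ≤ V.card ^ i :=
  (Finset.card_le_card (h.slice_subset_powersetCard i)).trans
    (V.card_powersetCard i ▸ Nat.choose_le_pow V.card i)

theorem IsEulerian.facePolynomial_mem_dehnSommerville (R : Type*) [CommRing R]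
    (hE : IsEulerian d Δ) (h : IsPureComplex V d Δ) :
    facePolynomial R Δ ∈ dehnSommerville R d := by
  refine mem_dehnSommerville.2 ⟨degree_facePolynomial_le fun _ => h.card_le, ?_⟩
  rw [facePolynomial_comp_neg_one_sub_X h.isLowerSet, facePolynomial, Finset.smul_sum]
  refine Finset.sum_congr rfl fun F hF => ?_
  rw [hE.sum_neg_one_pow_card h.isLowerSet hF]
  simp

theorem exists_forall_isEulerian_card_slice_le (d : ℕ) {j : ℕ} (hj : j ≠ 0) :
    ∃ C : ℝ, ∀ (V : Finset ℕ) (Δ : Finset (Finset ℕ)), IsPureComplex V d Δ → IsEulerian d Δ →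
      ((Δ # j).card : ℝ) ≤ C * (V.card : ℝ) ^ (d / 2) := by
  obtain ⟨c, hc⟩ := exists_coeff_eq_sum_of_mem_dehnSommerville ℝ d j
  refine ⟨∑ i, |c i|, fun V Δ h hE => ?_⟩
  obtain rfl | hV := V.eq_empty_or_nonempty
  · have hslice : (Δ # j).card = 0 := by simpa [hj] using h.card_slice_le_pow j
    rw [hslice, Nat.cast_zero]
    positivity
  have hcard (i : Fin (d / 2 + 1)) : ((Δ # (i : ℕ)).card : ℝ) ≤ (V.card : ℝ) ^ (d / 2) := by
    exact_mod_cast (h.card_slice_le_pow i).trans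
      (Nat.pow_le_pow_right hV.card_pos (Nat.lt_succ_iff.1 i.2))
  have hsum := hc _ (hE.facePolynomial_mem_dehnSommerville ℝ h)
  simp only [coeff_facePolynomial] at hsum
  rw [hsum, Finset.sum_mul]
  gcongr with i
  · exact le_abs_self (c i)
  · exact hcard i

end Eulerian

section IndependentSets

theorem choose_mul_pow_le_pow_mul_choose {k n : ℕ} (hkn : k ≤ n) (d : ℕ) :
    k.choose d * n ^ d ≤ k ^ d * n.choose d := by
  suffices h : k.descFactorial d * n ^ d ≤ k ^ d * n.descFactorial d by
    rw [Nat.descFactorial_eq_factorial_mul_choose, Nat.descFactorial_eq_factorial_mul_choose,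
      mul_assoc, mul_left_comm (k ^ d)] at h
    exact Nat.le_of_mul_le_mul_left h d.factorial_pos
  induction d with
  | zero => simp
  | succ d ih =>
    have hstep : (k - d) * n ≤ k * (n - d) := by
      rw [Nat.sub_mul, Nat.mul_sub]
      exact Nat.sub_le_sub_left ((Nat.mul_comm k d).trans_le (Nat.mul_le_mul_left d hkn)) _
    calc k.descFactorial (d + 1) * n ^ (d + 1)
        = ((k - d) * n) * (k.descFactorial d * n ^ d) := by rw [Nat.descFactorial_succ]; ring
      _ ≤ (k * (n - d)) * (k ^ d * n.descFactorial d) := Nat.mul_le_mul hstep ih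
      _ = k ^ (d + 1) * n.descFactorial (d + 1) := by rw [Nat.descFactorial_succ]; ring

variable {α : Type*}

theorem exists_mem_powersetCard_forall_not_subset {V : Finset α} {d k : ℕ} {A : Finset (Finset α)}
    (hA : A ⊆ V.powersetCard d) (hk : k ≤ V.card) (hlt : A.card * k.choose d < V.card.choose d) :
    ∃ K ∈ V.powersetCard k, ∀ F ∈ A, ¬F ⊆ K := by
  classical
  by_contra! hcover
  have hdk : d ≤ k := by
    obtain ⟨K, hK⟩ := Finset.powersetCard_nonempty.2 hk
    obtain ⟨F, hF, hFK⟩ := hcover K hK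
    rw [← (Finset.mem_powersetCard.1 (hA hF)).2, ← (Finset.mem_powersetCard.1 hK).2]
    exact Finset.card_le_card hFK
  have hcount : V.card.choose k * 1 ≤ A.card * (V.card - d).choose (k - d) := by
    rw [← Finset.card_powersetCard]
    refine Finset.card_mul_le_card_mul (fun K F => F ⊆ K) (fun K hK => ?_) fun F hF => ?_
    · obtain ⟨F, hF, hFK⟩ := hcover K hK
      exact Finset.card_pos.2 ⟨F, Finset.mem_filter.2 ⟨hF, hFK⟩⟩
    · obtain ⟨hFV, rfl⟩ := Finset.mem_powersetCard.1 (hA hF)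
      exact (Finset.card_filter_powersetCard_subset F V k hFV hdk).le
  refine hlt.not_ge (Nat.le_of_mul_le_mul_right (c := (V.card - d).choose (k - d)) ?_
    (Nat.choose_pos (Nat.sub_le_sub_right hk d)))
  calc V.card.choose d * (V.card - d).choose (k - d)
      = V.card.choose k * 1 * k.choose d := by rw [mul_one, Nat.choose_mul hdk]
    _ ≤ A.card * (V.card - d).choose (k - d) * k.choose d := Nat.mul_le_mul_right _ hcount
    _ = A.card * k.choose d * (V.card - d).choose (k - d) := by ring

theorem exists_mem_powersetCard_forall_not_subset_of_card_mul_pow_lt {V : Finset α} {d k : ℕ}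
    {A : Finset (Finset α)} (hA : A ⊆ V.powersetCard d) (hk : k ≤ V.card)
    (hlt : A.card * k ^ d < V.card ^ d) :
    ∃ K ∈ V.powersetCard k, ∀ F ∈ A, ¬F ⊆ K := by
  obtain rfl | hne := A.eq_empty_or_nonempty
  · simpa using Finset.exists_subset_card_eq hk
  have hd : d ≤ V.card := Finset.powersetCard_nonempty.1 (hne.mono hA)
  refine exists_mem_powersetCard_forall_not_subset hA hk
    (Nat.lt_of_mul_lt_mul_right (a := V.card ^ d) ?_)
  calc A.card * k.choose d * V.card ^ d
      ≤ A.card * k ^ d * V.card.choose d := by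
        rw [mul_assoc, mul_assoc]
        exact Nat.mul_le_mul_left _ (choose_mul_pow_le_pow_mul_choose hk d)
    _ < V.card ^ d * V.card.choose d := Nat.mul_lt_mul_of_pos_right hlt (Nat.choose_pos hd)
    _ = V.card.choose d * V.card ^ d := Nat.mul_comm _ _

theorem natCast_rpow_le_self {n : ℕ} {a : ℝ} (ha0 : a ≠ 0) (ha1 : a ≤ 1) : (n : ℝ) ^ a ≤ n := by
  obtain rfl | hn := n.eq_zero_or_pos
  · simp [Real.zero_rpow ha0]
  · exact Real.rpow_le_self_of_one_le (Nat.one_le_cast.2 hn) ha1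

-- The factor `2` in `1 / (2 * C)` absorbs the rounding: the ceiling of a number above `1` is less
-- than twice that number.
theorem mul_rpow_mul_ceil_pow_lt {d : ℕ} (hd : d ≠ 0) {n m C : ℝ} (hn : 0 < n) (hC : 1 ≤ C)
    (hx : 1 < 1 / (2 * C) * n ^ (1 - m / d)) :
    C * n ^ m * (⌈1 / (2 * C) * n ^ (1 - m / d)⌉₊ : ℝ) ^ d < n ^ d := by
  set x : ℝ := 1 / (2 * C) * n ^ (1 - m / d) with hx_def
  have hceil : (⌈x⌉₊ : ℝ) < n ^ (1 - m / d) / C := by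
    calc (⌈x⌉₊ : ℝ) < x + 1 := Nat.ceil_lt_add_one (by positivity)
      _ < x + x := by gcongr
      _ = n ^ (1 - m / d) / C := by rw [hx_def]; field_simp; norm_num
  have hsplit : n ^ m * (n ^ (1 - m / d)) ^ d = n ^ d := by
    rw [← Real.rpow_mul_natCast hn.le, ← Real.rpow_add hn, ← Real.rpow_natCast]
    congr 1
    field_simp
    ring
  calc C * n ^ m * (⌈x⌉₊ : ℝ) ^ d < C * n ^ m * (n ^ (1 - m / d) / C) ^ d := by gcongr
    _ = C / C ^ d * n ^ d := by rw [← hsplit, div_pow]; ring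
    _ ≤ n ^ d := mul_le_of_le_one_left (by positivity)
        ((div_le_one (by positivity)).2 (le_self_pow₀ hC hd))

theorem exists_forall_not_subset_of_card_le_mul_rpow {d : ℕ} (hd : 2 ≤ d) {m : ℝ} (hm : 0 ≤ m)
    (hmd : m < d) {C : ℝ} (hC : 1 ≤ C) {V : Finset α} {A : Finset (Finset α)}
    (hA : A ⊆ V.powersetCard d) (hcard : (A.card : ℝ) ≤ C * (V.card : ℝ) ^ m) :
    ∃ K ⊆ V, 1 / (2 * C) * (V.card : ℝ) ^ (1 - m / d) ≤ K.card ∧ ∀ F ∈ A, ¬F ⊆ K := by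
  have hd0 : (0 : ℝ) < d := by positivity
  have ha0 : 0 < 1 - m / d := sub_pos.2 ((div_lt_one hd0).2 hmd)
  have ha1 : 1 - m / d ≤ 1 := sub_le_self 1 (by positivity)
  set x : ℝ := 1 / (2 * C) * (V.card : ℝ) ^ (1 - m / d)
  suffices h : ∃ K ∈ V.powersetCard ⌈x⌉₊, ∀ F ∈ A, ¬F ⊆ K by
    obtain ⟨K, hK, hKA⟩ := h
    obtain ⟨hKV, hKx⟩ := Finset.mem_powersetCard.1 hK
    exact ⟨K, hKV, hKx ▸ Nat.le_ceil x, hKA⟩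
  have hceil : ⌈x⌉₊ ≤ V.card := by
    have hC_inv : 1 / (2 * C) ≤ 1 := (div_le_one (by positivity)).2 (by linarith)
    exact Nat.ceil_le.2 ((mul_le_of_le_one_left (by positivity) hC_inv).trans
      (natCast_rpow_le_self ha0.ne' ha1))
  rcases le_or_gt x 1 with hx1 | hx1
  · obtain ⟨K, hK⟩ := Finset.powersetCard_nonempty.2 hceil
    refine ⟨K, hK, fun F hF hFK => ?_⟩
    have hFcard : F.card = d := (Finset.mem_powersetCard.1 (hA hF)).2
    have hKcard : K.card = ⌈x⌉₊ := (Finset.mem_powersetCard.1 hK).2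
    have hceil1 : ⌈x⌉₊ ≤ 1 := Nat.ceil_le.2 (by simpa using hx1)
    have hFK_card := Finset.card_le_card hFK
    omega
  refine exists_mem_powersetCard_forall_not_subset_of_card_mul_pow_lt hA hceil ?_
  have hV : 0 < V.card := (Nat.ceil_pos.2 (one_pos.trans hx1)).trans_le hceil
  have hlt : (A.card : ℝ) * (⌈x⌉₊ : ℝ) ^ d < (V.card : ℝ) ^ d :=
    calc (A.card : ℝ) * (⌈x⌉₊ : ℝ) ^ d ≤ C * (V.card : ℝ) ^ m * (⌈x⌉₊ : ℝ) ^ d := by gcongr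
      _ < (V.card : ℝ) ^ d :=
        mul_rpow_mul_ceil_pow_lt (by omega) (Nat.cast_pos.2 hV) hC hx1
  exact_mod_cast hlt

end IndependentSets

theorem complexTransversalNumber_add_card_le {V K : Finset ℕ} {Δ : Finset (Finset ℕ)}
    (hΔ : ∀ F ∈ Δ, F ⊆ V) (hKV : K ⊆ V) (hK : ∀ F, IsFacetOf Δ F → ¬F ⊆ K) :
    complexTransversalNumber V Δ + K.card ≤ V.card := by
  rw [← Finset.card_sdiff_add_card_eq_card hKV]
  refine Nat.add_le_add_right (Nat.sInf_le ?_) _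
  refine ⟨V \ K, Finset.sdiff_subset, fun F hF => ?_, rfl⟩
  obtain ⟨v, hvF, hvK⟩ := Finset.not_subset.1 (hK F hF)
  exact ⟨v, by simp [hvF, hvK, hΔ F hF.1 hvF]⟩

theorem exists_forall_isEulerian_complexTransversalNumber_le {d : ℕ} (hd : 2 ≤ d) :
    ∃ c : ℝ, 0 < c ∧ ∀ (V : Finset ℕ) (Δ : Finset (Finset ℕ)),
      IsPureComplex V d Δ → IsEulerian d Δ →
      (complexTransversalNumber V Δ : ℝ) ≤
        V.card - c * (V.card : ℝ) ^ (1 - ((d / 2 : ℕ) : ℝ) / d) := by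
  obtain ⟨C, hC⟩ := exists_forall_isEulerian_card_slice_le d (j := d) (by omega)
  refine ⟨1 / (2 * max C 1), by positivity, fun V Δ h hE => ?_⟩
  have hfacets : ((Δ # d).card : ℝ) ≤ max C 1 * (V.card : ℝ) ^ ((d / 2 : ℕ) : ℝ) := by
    rw [Real.rpow_natCast]
    exact (hC V Δ h hE).trans (by gcongr; exact le_max_left C 1)
  obtain ⟨K, hKV, hKcard, hK⟩ := exists_forall_not_subset_of_card_le_mul_rpow hd
    (Nat.cast_nonneg _) (Nat.cast_lt.2 (Nat.div_lt_self (by omega) one_lt_two))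
    (le_max_right C 1) (h.slice_subset_powersetCard d) hfacets
  have hT : (complexTransversalNumber V Δ : ℝ) + K.card ≤ V.card := by
    exact_mod_cast complexTransversalNumber_add_card_le h.1 hKV fun F hF =>
      hK F (Finset.mem_slice.2 ⟨hF.1, h.2.2.2 F hF⟩)
  linarith

theorem stmt_1 (d : ℕ) (hd : 2 ≤ d) :
    ∃ c : ℝ, 0 < c ∧ ∀ (V : Finset ℕ) (Δ : Finset (Finset ℕ)),
      IsPureComplex V d Δ → IsEulerian d Δ →
      ((Even d → (complexTransversalNumber V Δ : ℝ) ≤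
          (V.card : ℝ) - c * (V.card : ℝ) ^ ((1 : ℝ) / 2)) ∧
       (Odd d → (complexTransversalNumber V Δ : ℝ) ≤
          (V.card : ℝ) - c * (V.card : ℝ) ^ (((d : ℝ) + 1) / (2 * (d : ℝ))))) := by
  obtain ⟨c, hc, hT⟩ := exists_forall_isEulerian_complexTransversalNumber_le hd
  refine ⟨c, hc, fun V Δ h hE => ⟨fun heven => ?_, fun hodd => ?_⟩⟩
  · have hexp : 1 - ((d / 2 : ℕ) : ℝ) / d = 1 / 2 := by
      rw [Nat.cast_div heven.two_dvd two_ne_zero]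
      field_simp
      norm_num
    exact hexp ▸ hT V Δ h hE
  · have hexp : 1 - ((d / 2 : ℕ) : ℝ) / d = (d + 1) / (2 * d) := by
      have hhalf : 2 * ((d / 2 : ℕ) : ℝ) + 1 = d := by
        exact_mod_cast Nat.two_mul_div_two_add_one_of_odd hodd
      field_simp
      linarith
    exact hexp ▸ hT V Δ h hE
end

section
/- Let d ≥ 4 and let Δ be a pure (d−1)-dimensional simplicial complex with n vertices and ℓ one-dimensional faces (edges). Then T(Δ) ≤ n − n²/(2ℓ + n). -/
/-!
A set of vertices of `Δ` that spans no edge contains no facet, since facets have at least two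
vertices; hence its complement is a transversal, and `T(Δ) ≤ n - α` for the independence number `α`
of the 1-skeleton. Turán's theorem for the complement of the 1-skeleton gives `n² ≤ α (2ℓ + n)`.
-/

open Finset

section Turan

variable {W : Type*} [Fintype W] {G : SimpleGraph W} [DecidableRel G.Adj] {r : ℕ}

/-- Turán's bound `2 r e ≤ (r - 1) n²`, rearranged to avoid the truncated subtraction at `r = 0`. -/
theorem two_mul_mul_card_edgeFinset_add_sq_card_le_of_cliqueFree (hG : G.CliqueFree (r + 1)) :
    2 * r * #G.edgeFinset + Fintype.card W ^ 2 ≤ r * Fintype.card W ^ 2 := by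
  cases r with
  | zero =>
    have : IsEmpty W := SimpleGraph.cliqueFree_one.mp hG
    simp
  | succ k =>
    obtain ⟨H, _, hH⟩ := SimpleGraph.exists_isTuranMaximal (V := W) k.succ_pos
    have hGH : #G.edgeFinset ≤ #H.edgeFinset := hH.2 hG
    obtain ⟨e⟩ := hH.nonempty_iso_turanGraph
    grw [hGH, e.card_edgeFinset_eq, SimpleGraph.mul_card_edgeFinset_turanGraph_le]
    rw [Nat.add_sub_cancel, Nat.succ_mul]

theorem card_edgeFinset_add_card_edgeFinset_compl [DecidableEq W] (G : SimpleGraph W)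
    [DecidableRel G.Adj] : #G.edgeFinset + #Gᶜ.edgeFinset = (Fintype.card W).choose 2 := by
  rw [← card_union_of_disjoint (SimpleGraph.disjoint_edgeFinset.mpr disjoint_compl_right),
    ← SimpleGraph.edgeFinset_sup, ← SimpleGraph.card_edgeFinset_top_eq_card_choose_two]
  exact congrArg card (SimpleGraph.edgeFinset_inj.mpr sup_compl_eq_top)

theorem sq_card_le_mul_of_indepSetFree (hG : G.IndepSetFree (r + 1)) :
    Fintype.card W ^ 2 ≤ r * (2 * #G.edgeFinset + Fintype.card W) := by
  classical
  have hturan := two_mul_mul_card_edgeFinset_add_sq_card_le_of_cliqueFree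
    (G.cliqueFree_compl.mpr hG)
  have hsq : 2 * #G.edgeFinset + 2 * #Gᶜ.edgeFinset + Fintype.card W = Fintype.card W ^ 2 := by
    rw [← mul_add, card_edgeFinset_add_card_edgeFinset_compl, Nat.choose_two_right,
      Nat.mul_div_cancel' (Nat.even_mul_pred_self _).two_dvd,
      Nat.mul_sub_one, Nat.sub_add_cancel (Nat.le_mul_self _), sq]
  have hmul : r * (2 * #G.edgeFinset + Fintype.card W) + 2 * r * #Gᶜ.edgeFinset =
      r * Fintype.card W ^ 2 := by
    rw [← hsq]
    ring
  lia

theorem sq_card_le_indepNum_mul (G : SimpleGraph W) [DecidableRel G.Adj] :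
    Fintype.card W ^ 2 ≤ G.indepNum * (2 * #G.edgeFinset + Fintype.card W) :=
  sq_card_le_mul_of_indepSetFree fun _ hs =>
    (hs.card_eq ▸ hs.isIndepSet.card_le_indepNum).not_gt (Nat.lt_succ_self _)

end Turan

section OneSkeleton

variable {α : Type*} [DecidableEq α]

/-- The graph of a complex `Δ`, whose edges are the two-element faces of `Δ`. -/
def oneSkeleton (Δ : Finset (Finset α)) : SimpleGraph α where
  Adj v w := v ≠ w ∧ {v, w} ∈ Δ
  symm := ⟨fun v w h => ⟨h.1.symm, pair_comm v w ▸ h.2⟩⟩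
  loopless := ⟨fun _ h => h.1 rfl⟩

instance (Δ : Finset (Finset α)) : DecidableRel (oneSkeleton Δ).Adj :=
  fun v w => inferInstanceAs (Decidable (v ≠ w ∧ {v, w} ∈ Δ))

theorem card_edgeFinset_induce_oneSkeleton_le (V : Finset α) (Δ : Finset (Finset α)) :
    #((oneSkeleton Δ).induce (V : Set α)).edgeFinset ≤ #{F ∈ Δ | #F = 2} := by
  refine card_le_card_of_injOn (fun e => (e.map Subtype.val).toFinset) (fun e he => ?_) ?_
  · induction e with | _ v w
    obtain ⟨hne, hmem⟩ : (oneSkeleton Δ).Adj v w := SimpleGraph.mem_edgeFinset.mp he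
    simp [Sym2.toFinset_mk_eq, hmem, card_pair hne]
  · refine Function.Injective.injOn fun e e' hee' => ?_
    refine Sym2.map.injective Subtype.val_injective (Sym2.ext fun a => ?_)
    rw [← Sym2.mem_toFinset, ← Sym2.mem_toFinset]
    exact iff_of_eq (congrArg (a ∈ ·) hee')

theorem not_subset_of_isIndepSet_oneSkeleton {Δ : Finset (Finset α)} {I F : Finset α}
    (hΔ : IsLowerSet (Δ : Set (Finset α))) (hI : (oneSkeleton Δ).IsIndepSet I)
    (hF : F ∈ Δ) (hcard : 2 ≤ #F) : ¬F ⊆ I := by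
  intro hFI
  obtain ⟨a, ha, b, hb, hab⟩ := one_lt_card.mp hcard
  have hpair : {a, b} ∈ Δ := hΔ (show {a, b} ⊆ F by simp [insert_subset_iff, ha, hb]) hF
  exact hI (hFI ha) (hFI hb) hab ⟨hab, hpair⟩

end OneSkeleton

section Transversal

variable {V : Finset ℕ} {Δ : Finset (Finset ℕ)}

theorem complexTransversalNumber_le_card_sdiff {I : Finset ℕ} (hV : ∀ F ∈ Δ, F ⊆ V)
    (hI : ∀ F, IsFacetOf Δ F → ¬F ⊆ I) : complexTransversalNumber V Δ ≤ #(V \ I) := by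
  refine Nat.sInf_le ⟨V \ I, sdiff_subset, fun F hF => ?_, rfl⟩
  obtain ⟨a, haF, haI⟩ := not_subset.mp (hI F hF)
  exact ⟨a, mem_inter.mpr ⟨mem_sdiff.mpr ⟨hV F hF.1 haF, haI⟩, haF⟩⟩

theorem complexTransversalNumber_add_indepNum_le (hV : ∀ F ∈ Δ, F ⊆ V)
    (hΔ : IsLowerSet (Δ : Set (Finset ℕ))) (hfacet : ∀ F, IsFacetOf Δ F → 2 ≤ #F) :
    complexTransversalNumber V Δ + ((oneSkeleton Δ).induce (V : Set ℕ)).indepNum ≤ #V := by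
  obtain ⟨s, hs⟩ := ((oneSkeleton Δ).induce (V : Set ℕ)).exists_isNIndepSet_indepNum
  let I : Finset ℕ := s.map (.subtype _)
  have hIV : I ⊆ V := fun a ha => property_of_mem_map_subtype s ha
  have hI : (oneSkeleton Δ).IsIndepSet I := by
    rw [coe_map]
    rintro _ ⟨v, hv, rfl⟩ _ ⟨w, hw, rfl⟩ hvw
    exact hs.isIndepSet hv hw (ne_of_apply_ne _ hvw)
  rw [← hs.card_eq, ← card_map (.subtype _), ← card_sdiff_add_card_eq_card hIV]
  grw [complexTransversalNumber_le_card_sdiff hV fun F hF =>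
    not_subset_of_isIndepSet_oneSkeleton hΔ hI hF.1 (hfacet F hF)]

theorem stmt_2_general (V : Finset ℕ) (Δ : Finset (Finset ℕ)) (hV : ∀ F ∈ Δ, F ⊆ V)
    (hΔ : IsLowerSet (Δ : Set (Finset ℕ))) (hfacet : ∀ F, IsFacetOf Δ F → 2 ≤ #F) :
    (complexTransversalNumber V Δ : ℝ) ≤
      (#V : ℝ) - (#V : ℝ) ^ 2 / (2 * (#{F ∈ Δ | #F = 2} : ℝ) + (#V : ℝ)) := by
  set α := ((oneSkeleton Δ).induce (V : Set ℕ)).indepNum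
  have hT : (complexTransversalNumber V Δ : ℝ) + α ≤ #V := by
    exact_mod_cast complexTransversalNumber_add_indepNum_le hV hΔ hfacet
  have hsq : #V ^ 2 ≤ α * (2 * #{F ∈ Δ | #F = 2} + #V) := by
    grw [← card_edgeFinset_induce_oneSkeleton_le V Δ]
    simpa using sq_card_le_indepNum_mul ((oneSkeleton Δ).induce (V : Set ℕ))
  have hα : (#V : ℝ) ^ 2 / (2 * #{F ∈ Δ | #F = 2} + #V) ≤ α :=
    div_le_of_le_mul₀ (by positivity) (by positivity) (by exact_mod_cast hsq)
  linarith

end Transversal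

theorem stmt_2 (d : ℕ) (hd : 4 ≤ d) (V : Finset ℕ) (Δ : Finset (Finset ℕ))
    (hΔ : IsPureComplex V d Δ) :
    (complexTransversalNumber V Δ : ℝ) ≤
      (V.card : ℝ) - (V.card : ℝ) ^ 2 /
        (2 * ((Δ.filter fun F => F.card = 2).card : ℝ) + (V.card : ℝ)) := by
  obtain ⟨hV, hdown, -, hpure⟩ := hΔ
  refine stmt_2_general V Δ hV (fun F G hGF hF => hdown F hF G hGF) fun F hF => ?_
  rw [hpure F hF]
  lia
end

section
/- Let k ≥ 1 and s ≥ 1 be integers and let n be a positive integer. Then every transversal of the family F^{n,2k}_s has size at least n·(1 − 1/(s+1)) − k·s. -/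
/-- Membership in the family `F^{n,2k}_s`: `e = {i_1 < … < i_{2k}} ⊆ [n]` and there is
`1 ≤ ℓ ≤ s` with `i_{2j} - i_{2j-1} = ℓ` for all `1 ≤ j ≤ k`. (Indices are 0-based.) -/
def FamEven (n k s : ℕ) (e : Finset ℕ) : Prop :=
  ∃ i : Fin (2 * k) → ℕ, StrictMono i ∧ (∀ j, i j ∈ Finset.Icc 1 n) ∧
    e = Finset.image i Finset.univ ∧
    ∃ ℓ, 1 ≤ ℓ ∧ ℓ ≤ s ∧
      ∀ j : Fin k, i ⟨2 * j.val + 1, by have := j.isLt; omega⟩ -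
        i ⟨2 * j.val, by have := j.isLt; omega⟩ = ℓ

/-- Membership in the family `F^{n,2k+1}_s`: `e = {i_1 < … < i_{2k+1}} ⊆ [n]`,
`i_{2k+1} - i_{2k} ≤ s`, and there is `1 ≤ ℓ ≤ s` with `i_{2j} - i_{2j-1} = ℓ`
for all `1 ≤ j ≤ k`. (Indices are 0-based.) -/
def FamOdd (n k s : ℕ) (e : Finset ℕ) : Prop :=
  ∃ i : Fin (2 * k + 1) → ℕ, StrictMono i ∧ (∀ j, i j ∈ Finset.Icc 1 n) ∧
    e = Finset.image i Finset.univ ∧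
    i ⟨2 * k, by omega⟩ - i ⟨2 * k - 1, by omega⟩ ≤ s ∧
    ∃ ℓ, 1 ≤ ℓ ∧ ℓ ≤ s ∧
      ∀ j : Fin k, i ⟨2 * j.val + 1, by have := j.isLt; omega⟩ -
        i ⟨2 * j.val, by have := j.isLt; omega⟩ = ℓ

/-!
Let `C` be the complement of a transversal. For `0 ≤ d ≤ s`, an element `a` of `C` either is
followed by `d` consecutive numbers outside `C`, or has its successor in `C` at distance `l` for
some `1 ≤ l ≤ d`. In the first case the sums `a + d`, over all such `a` and `d`, are distinct
elements of `[n + s]`. In the second case, for each fixed `l` there are at most `2(k - 1)` such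
`a`: among `2k - 1` of them every other one would give `k` disjoint pairs at distance `l`, that is,
a member of the family inside `C`. Summing over `d` yields
`(s + 1)|C| ≤ n + s + (k - 1)s(s + 1)`.
-/

/-- The elements `a` of `C` whose next larger element in `C` is `a + l` (meant for `1 ≤ l`;
for `l = 0` the condition is void). -/
def gapStarts (C : Finset ℕ) (l : ℕ) : Finset ℕ :=
  {a ∈ C | a + l ∈ C ∧ ∀ x ∈ C, a < x → a + l ≤ x}

/-- The elements `a` of `C` followed by at least `d` consecutive numbers outside `C`. -/
def clearStarts (C : Finset ℕ) (d : ℕ) : Finset ℕ :=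
  {a ∈ C | ∀ x ∈ C, a < x → a + d < x}

/-- The sequence `g 0, g 0 + l, g 1, g 1 + l, …`, used to enumerate members of `F^{n,2k}_s`. -/
def pairSequence {k : ℕ} (g : Fin k → ℕ) (l : ℕ) (t : Fin (2 * k)) : ℕ :=
  g ⟨t / 2, by omega⟩ + t % 2 * l

section Counting

variable (C : Finset ℕ)

lemma card_le_card_clearStarts_add_sum_card_gapStarts (d : ℕ) :
    C.card ≤ (clearStarts C d).card + ∑ l ∈ Finset.Icc 1 d, (gapStarts C l).card := by
  have hcover : C ⊆ clearStarts C d ∪ (Finset.Icc 1 d).biUnion (gapStarts C) := by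
    intro a ha
    by_cases hclear : ∀ x ∈ C, a < x → a + d < x
    · exact Finset.mem_union_left _ (Finset.mem_filter.2 ⟨ha, hclear⟩)
    push Not at hclear
    obtain ⟨x, hx, hax, hxd⟩ := hclear
    obtain ⟨y, hy, hmin⟩ := Finset.exists_min_image {z ∈ C | a < z} id
      ⟨x, Finset.mem_filter.2 ⟨hx, hax⟩⟩
    simp only [Finset.mem_filter, id, and_imp] at hy hmin
    have hyx : y ≤ x := hmin x hx hax
    have hnext : a + (y - a) = y := Nat.add_sub_cancel' hy.2.le
    refine Finset.mem_union_right _ (Finset.mem_biUnion.2 ⟨y - a, ?_, ?_⟩)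
    · exact Finset.mem_Icc.2 (by omega)
    · exact Finset.mem_filter.2 ⟨ha, hnext.symm ▸ hy.1, hnext.symm ▸ hmin⟩
  calc C.card ≤ (clearStarts C d ∪ (Finset.Icc 1 d).biUnion (gapStarts C)).card :=
        Finset.card_le_card hcover
    _ ≤ (clearStarts C d).card + ((Finset.Icc 1 d).biUnion (gapStarts C)).card :=
        Finset.card_union_le _ _
    _ ≤ (clearStarts C d).card + ∑ l ∈ Finset.Icc 1 d, (gapStarts C l).card := by
        gcongr
        exact Finset.card_biUnion_le

variable {C}

lemma eq_of_add_eq_add_of_mem_clearStarts {a b d e : ℕ} (ha : a ∈ clearStarts C d)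
    (hb : b ∈ clearStarts C e) (h : a + d = b + e) : a = b := by
  obtain ⟨haC, ha_clear⟩ := Finset.mem_filter.1 ha
  obtain ⟨hbC, hb_clear⟩ := Finset.mem_filter.1 hb
  have hba : ¬a < b := fun hlt => by have := ha_clear b hbC hlt; omega
  have hab : ¬b < a := fun hlt => by have := hb_clear a haC hlt; omega
  omega

lemma sum_card_clearStarts_le {n : ℕ} (hC : C ⊆ Finset.Icc 1 n) (s : ℕ) :
    ∑ d ∈ Finset.range (s + 1), (clearStarts C d).card ≤ n + s := by
  rw [← Finset.card_sigma, ← Nat.add_sub_cancel (n + s) 1, ← Nat.card_Icc]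
  refine Finset.card_le_card_of_injOn (fun p => p.2 + p.1) ?_ ?_
  · rintro ⟨d, a⟩ hp
    obtain ⟨hd, ha⟩ := Finset.mem_sigma.1 hp
    have hd_le := Finset.mem_range.1 hd
    have han := Finset.mem_Icc.1 (hC (Finset.mem_filter.1 ha).1)
    exact Finset.mem_coe.2 (Finset.mem_Icc.2 (by dsimp only at *; omega))
  · rintro ⟨d, a⟩ hp ⟨e, b⟩ hq (h : a + d = b + e)
    obtain rfl := eq_of_add_eq_add_of_mem_clearStarts
      (Finset.mem_sigma.1 hp).2 (Finset.mem_sigma.1 hq).2 h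
    obtain rfl := Nat.add_left_cancel h
    rfl

lemma card_mul_succ_le_of_card_gapStarts_le {n s M : ℕ} (hC : C ⊆ Finset.Icc 1 n)
    (hgap : ∀ l ∈ Finset.Icc 1 s, (gapStarts C l).card ≤ M) :
    C.card * (s + 1) ≤ n + s + M * ∑ d ∈ Finset.range (s + 1), d := by
  have hsum : ∀ d ∈ Finset.range (s + 1),
      ∑ l ∈ Finset.Icc 1 d, (gapStarts C l).card ≤ M * d := fun d hd => by
    have hds := Finset.mem_range_succ_iff.1 hd
    calc ∑ l ∈ Finset.Icc 1 d, (gapStarts C l).card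
        ≤ (Finset.Icc 1 d).card • M := Finset.sum_le_card_nsmul _ _ _ fun l hl =>
          hgap l (Finset.Icc_subset_Icc_right hds hl)
      _ = M * d := by rw [Nat.card_Icc, Nat.add_sub_cancel, smul_eq_mul, mul_comm]
  calc C.card * (s + 1) = ∑ _d ∈ Finset.range (s + 1), C.card := by
        rw [Finset.sum_const, Finset.card_range, smul_eq_mul, mul_comm]
    _ ≤ ∑ d ∈ Finset.range (s + 1), ((clearStarts C d).card + M * d) :=
        Finset.sum_le_sum fun d hd =>
          (card_le_card_clearStarts_add_sum_card_gapStarts C d).trans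
            (Nat.add_le_add_left (hsum d hd) _)
    _ ≤ n + s + M * ∑ d ∈ Finset.range (s + 1), d := by
        rw [Finset.sum_add_distrib, ← Finset.mul_sum]
        exact Nat.add_le_add_right (sum_card_clearStarts_le hC s) _

end Counting

section PairSequence

variable {k l : ℕ} {g : Fin k → ℕ}

lemma pairSequence_strictMono (hl : 0 < l) (hg : ∀ i j, i < j → g i + l < g j) :
    StrictMono (pairSequence g l) := by
  intro p q hpq
  by_cases hpair : p.val / 2 = q.val / 2
  · have hp : p.val % 2 = 0 := by omega
    have hq : q.val % 2 = 1 := by omega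
    simpa only [pairSequence, hpair, hp, hq, zero_mul, one_mul, add_zero, lt_add_iff_pos_right]
  · calc pairSequence g l p ≤ g ⟨p / 2, by omega⟩ + 1 * l :=
          Nat.add_le_add_left (Nat.mul_le_mul_right l (by omega)) _
      _ < g ⟨q / 2, by omega⟩ := by
          rw [one_mul]
          exact hg _ _ (Fin.mk_lt_mk.2 (by omega))
      _ ≤ pairSequence g l q := Nat.le_add_right _ _

lemma pairSequence_mem {C : Finset ℕ} (hstart : ∀ i, g i ∈ C) (hend : ∀ i, g i + l ∈ C)
    (t : Fin (2 * k)) : pairSequence g l t ∈ C := by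
  rcases Nat.mod_two_eq_zero_or_one t.val with ht | ht
  · simpa only [pairSequence, ht, zero_mul, add_zero] using hstart _
  · simpa only [pairSequence, ht, one_mul] using hend _

lemma famEven_image_pairSequence {n s : ℕ} (hl : 0 < l) (hls : l ≤ s)
    (hg : ∀ i j, i < j → g i + l < g j) (hmem : ∀ t, pairSequence g l t ∈ Finset.Icc 1 n) :
    FamEven n k s (Finset.univ.image (pairSequence g l)) := by
  refine ⟨pairSequence g l, pairSequence_strictMono hl hg, hmem, rfl, l, hl, hls, fun j => ?_⟩
  have hdiv : (2 * j.val + 1) / 2 = j.val := by omega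
  have hmod : (2 * j.val + 1) % 2 = 1 := by omega
  simp only [pairSequence, hdiv, hmod, Nat.mul_div_cancel_left _ two_pos, Nat.mul_mod_right,
    one_mul, zero_mul, add_zero, Nat.add_sub_cancel_left]

end PairSequence

section FamilyFree

variable {k s n : ℕ} {C : Finset ℕ}

-- Consecutive gaps may share an endpoint, so only every other one is kept.
lemma exists_separated_gapStarts {l : ℕ} (hcard : 2 * k ≤ (gapStarts C l).card + 1) :
    ∃ g : Fin k → ℕ, (∀ i, g i ∈ gapStarts C l) ∧ ∀ i j, i < j → g i + l < g j := by
  let f : Fin (2 * k - 1) ↪o ℕ := (gapStarts C l).orderEmbOfCardLe (by omega)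
  have hf : ∀ t, f t ∈ gapStarts C l := Finset.orderEmbOfCardLe_mem _ _
  refine ⟨fun i => f ⟨2 * i, by omega⟩, fun i => hf _, fun i j hij => ?_⟩
  let m : Fin (2 * k - 1) := ⟨2 * i + 1, by omega⟩
  have him : f ⟨2 * i, by omega⟩ < f m := f.strictMono (Fin.mk_lt_mk.2 (by omega))
  calc f ⟨2 * i, by omega⟩ + l ≤ f m :=
        (Finset.mem_filter.1 (hf _)).2.2 _ (Finset.mem_filter.1 (hf m)).1 him
    _ < f ⟨2 * j, by omega⟩ := f.strictMono (Fin.mk_lt_mk.2 (by omega))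

lemma card_gapStarts_add_one_lt_of_forall_not_famEven (hC : C ⊆ Finset.Icc 1 n)
    (hfree : ∀ e ⊆ C, ¬FamEven n k s e) {l : ℕ} (hl : 0 < l) (hls : l ≤ s) :
    (gapStarts C l).card + 1 < 2 * k := by
  by_contra! hcard
  obtain ⟨g, hg_mem, hg_sep⟩ := exists_separated_gapStarts hcard
  have hpair : ∀ t, pairSequence g l t ∈ C := pairSequence_mem
    (fun i => (Finset.mem_filter.1 (hg_mem i)).1)
    (fun i => (Finset.mem_filter.1 (hg_mem i)).2.1)
  exact hfree _ (Finset.image_subset_iff.2 fun t _ => hpair t)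
    (famEven_image_pairSequence hl hls hg_sep fun t => hC (hpair t))

lemma card_mul_succ_le_of_forall_not_famEven (hC : C ⊆ Finset.Icc 1 n)
    (hfree : ∀ e ⊆ C, ¬FamEven n k s e) :
    C.card * (s + 1) ≤ n + s + (k - 1) * (s * (s + 1)) := by
  have hgap : ∀ l ∈ Finset.Icc 1 s, (gapStarts C l).card ≤ (k - 1) * 2 := fun l hl => by
    obtain ⟨hl_pos, hls⟩ := Finset.mem_Icc.1 hl
    have := card_gapStarts_add_one_lt_of_forall_not_famEven hC hfree hl_pos hls
    omega
  calc C.card * (s + 1) ≤ n + s + (k - 1) * 2 * ∑ d ∈ Finset.range (s + 1), d :=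
        card_mul_succ_le_of_card_gapStarts_le hC hgap
    _ = n + s + (k - 1) * (s * (s + 1)) := by
        rw [mul_assoc, mul_comm 2, Finset.sum_range_id_mul_two, Nat.add_sub_cancel,
          mul_comm (s + 1)]

end FamilyFree

theorem stmt_3 (k s n : ℕ) (hk : 1 ≤ k) (hs : 1 ≤ s) (hn : 0 < n)
    (S : Finset ℕ) (hS : S ⊆ Finset.Icc 1 n)
    (hT : ∀ e : Finset ℕ, FamEven n k s e → (S ∩ e).Nonempty) :
    (n : ℝ) * (1 - 1 / ((s : ℝ) + 1)) - (k : ℝ) * (s : ℝ) ≤ (S.card : ℝ) := by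
  set C := Finset.Icc 1 n \ S
  have hfree : ∀ e ⊆ C, ¬FamEven n k s e := fun e he hmem =>
    Finset.not_disjoint_iff_nonempty_inter.2 (hT e hmem)
      (Finset.disjoint_sdiff.mono_right he)
  have hcompl : (C.card : ℝ) + S.card = n := by
    exact_mod_cast (Finset.card_sdiff_add_card_eq_card hS).trans (Nat.card_Icc 1 n)
  have hbound : (C.card : ℝ) * (s + 1) ≤ n + s + ((k : ℝ) - 1) * (s * (s + 1)) := by
    rw [← Nat.cast_pred hk]
    exact_mod_cast card_mul_succ_le_of_forall_not_famEven Finset.sdiff_subset hfree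
  have hs_succ : (0 : ℝ) < s + 1 := by positivity
  refine le_of_mul_le_mul_right ?_ hs_succ
  calc ((n : ℝ) * (1 - 1 / (s + 1)) - k * s) * (s + 1) = n * s - k * s * (s + 1) := by
        field_simp
        ring
    _ ≤ n * s - k * s * (s + 1) + s * s := le_add_of_nonneg_right (by positivity)
    _ ≤ (n - C.card) * (s + 1) := by linarith
    _ = S.card * (s + 1) := by rw [← hcompl, add_sub_cancel_left]
end

section
/- Let k ≥ 1 and s ≥ 1 be integers and let n be a positive integer. Then every transversal of the family F^{n,2k+1}_s has size at least n·(1 − 2/(s+2)) − 2·k·s. -/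
/-!
Let `U` be the complement of the transversal, so that `U` contains no member of the family. Call
`x ∈ U` sparse if the window `[x, x + s + 1]` holds at most two points of `U`. Any window of length
`s + 2` then holds at most two sparse points, so there are at most `2(n + s + 1) / (s + 2)` of them.

If `x` is not sparse, its successor in `U` is `x + ℓ` for some `1 ≤ ℓ ≤ s`, and a further point of
`U` lies within `s` of `x + ℓ`. For a fixed `ℓ` there are at most `2k - 2` such `x`: among `2k - 1`
of them, every other one would give `k` disjoint pairs of difference `ℓ`, which together with
the further point form a member of the family inside `U`.
-/

open Finset

section Windows

theorem card_mul_le_of_forall_window_card_le {V : Finset ℕ} {n w r : ℕ} (hV : V ⊆ Icc 1 n)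
    (hr : ∀ v, #{x ∈ V | v ∈ Ico x (x + w)} ≤ r) : #V * w ≤ (n + w - 1) * r := by
  rw [← Nat.card_Ico 1 (n + w)]
  refine card_mul_le_card_mul (fun x v ↦ v ∈ Ico x (x + w)) (fun x hx ↦ ?_) (fun v _ ↦ hr v)
  have hwindow :
      Ico x (x + w) ⊆ (Ico 1 (n + w)).bipartiteAbove (fun x v ↦ v ∈ Ico x (x + w)) x := by
    intro v hv
    have := hV hx
    simp only [bipartiteAbove, mem_filter, mem_Ico, mem_Icc] at *
    omega
  simpa using card_le_card hwindow

/-- The points of `U` whose window `[x, x + w)` holds at most `r` points of `U`. -/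
def sparsePoints (U : Finset ℕ) (w r : ℕ) : Finset ℕ :=
  {x ∈ U | #(U ∩ Ico x (x + w)) ≤ r}

theorem card_filter_sparsePoints_le (U : Finset ℕ) (w r v : ℕ) :
    #{x ∈ sparsePoints U w r | v ∈ Ico x (x + w)} ≤ r := by
  set W := {x ∈ sparsePoints U w r | v ∈ Ico x (x + w)}
  obtain hempty | hne := W.eq_empty_or_nonempty
  · simp [hempty]
  have hmin := W.min'_mem hne
  have hsub : W ⊆ U ∩ Ico (W.min' hne) (W.min' hne + w) := by
    intro x hx
    have hle := W.min'_le x hx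
    obtain ⟨hxU, hxv⟩ := mem_filter.1 hx
    have hxv := mem_Ico.1 hxv
    have hmin_v := mem_Ico.1 (mem_filter.1 hmin).2
    exact mem_inter.2 ⟨(mem_filter.1 hxU).1, mem_Ico.2 (by omega)⟩
  exact (card_le_card hsub).trans (mem_filter.1 (mem_filter.1 hmin).1).2

theorem card_sparsePoints_mul_le {U : Finset ℕ} {n : ℕ} (hU : U ⊆ Icc 1 n) (w r : ℕ) :
    #(sparsePoints U w r) * w ≤ (n + w - 1) * r :=
  card_mul_le_of_forall_window_card_le ((filter_subset _ _).trans hU)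
    (card_filter_sparsePoints_le U w r)

end Windows

section PairedSeq

variable {a : ℕ → ℕ} {ℓ k : ℕ}

/-- The sequence `a 0, a 0 + ℓ, a 1, a 1 + ℓ, …`, used to enumerate members of the family. -/
def pairedSeq (a : ℕ → ℕ) (ℓ t : ℕ) : ℕ :=
  a (t / 2) + ℓ * (t % 2)

theorem pairedSeq_two_mul (a : ℕ → ℕ) (ℓ j : ℕ) : pairedSeq a ℓ (2 * j) = a j := by
  simp [pairedSeq]

theorem pairedSeq_two_mul_add_one (a : ℕ → ℕ) (ℓ j : ℕ) :
    pairedSeq a ℓ (2 * j + 1) = a j + ℓ := by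
  simp [pairedSeq, Nat.mul_add_div]

theorem pairedSeq_lt_succ (hℓ : 1 ≤ ℓ) (ha : ∀ j < k, a j + ℓ < a (j + 1)) {t : ℕ}
    (ht : t < 2 * k) : pairedSeq a ℓ t < pairedSeq a ℓ (t + 1) := by
  obtain ⟨j, rfl | rfl⟩ := t.even_or_odd'
  · rw [pairedSeq_two_mul, pairedSeq_two_mul_add_one]
    omega
  · rw [pairedSeq_two_mul_add_one, add_assoc, ← Nat.mul_succ, pairedSeq_two_mul]
    exact ha j (by omega)

theorem pairedSeq_mem {U : Finset ℕ} (haU : ∀ j ≤ k, a j ∈ U) (haℓU : ∀ j < k, a j + ℓ ∈ U)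
    {t : ℕ} (ht : t ≤ 2 * k) : pairedSeq a ℓ t ∈ U := by
  obtain ⟨j, rfl | rfl⟩ := t.even_or_odd'
  · rw [pairedSeq_two_mul]
    exact haU j (by omega)
  · rw [pairedSeq_two_mul_add_one]
    exact haℓU j (by omega)

theorem exists_famOdd_subset_of_pairs {U : Finset ℕ} {n s : ℕ} (hU : U ⊆ Icc 1 n) (hk : 1 ≤ k)
    (hℓ : 1 ≤ ℓ) (hℓs : ℓ ≤ s) (ha : ∀ j < k, a j + ℓ < a (j + 1)) (haU : ∀ j ≤ k, a j ∈ U)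
    (haℓU : ∀ j < k, a j + ℓ ∈ U) (hlast : a k ≤ a (k - 1) + ℓ + s) :
    ∃ e ⊆ U, FamOdd n k s e := by
  have hmem (t : Fin (2 * k + 1)) : pairedSeq a ℓ t ∈ U :=
    pairedSeq_mem haU haℓU (Nat.le_of_lt_succ t.isLt)
  refine ⟨univ.image fun t : Fin (2 * k + 1) ↦ pairedSeq a ℓ t, by simpa [image_subset_iff],
    _, ?_, fun t ↦ hU (hmem t), rfl, ?_, ℓ, hℓ, hℓs, fun j ↦ ?_⟩
  · exact Fin.strictMono_iff_lt_succ.2 fun t ↦ pairedSeq_lt_succ hℓ ha t.isLt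
  · have hindex : 2 * k - 1 = 2 * (k - 1) + 1 := by omega
    simp only [hindex, pairedSeq_two_mul, pairedSeq_two_mul_add_one]
    omega
  · simp only [pairedSeq_two_mul, pairedSeq_two_mul_add_one]
    omega

end PairedSeq

section PairStarts

variable {U : Finset ℕ} {n k s ℓ : ℕ}

/-- The `x ∈ U` whose successor in `U` is `x + ℓ` (for `ℓ ≥ 1`) and for which a further point of `U`
lies within `s` of `x + ℓ`. These are the candidates for the pairs of a member of the family. -/
def pairStarts (U : Finset ℕ) (s ℓ : ℕ) : Finset ℕ :=
  {x ∈ U | x + ℓ ∈ U ∧ (∀ y ∈ U, x < y → x + ℓ ≤ y) ∧ ∃ z ∈ U, x + ℓ < z ∧ z ≤ x + ℓ + s}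

theorem exists_mem_pairStarts {x : ℕ} (hx : x ∈ U) (hcrowded : 2 < #(U ∩ Ico x (x + (s + 2)))) :
    ∃ ℓ ∈ Icc 1 s, x ∈ pairStarts U s ℓ := by
  set A := (U ∩ Ico x (x + (s + 2))).erase x with hA
  have mem_A (y : ℕ) : y ∈ A ↔ y ∈ U ∧ x < y ∧ y < x + (s + 2) := by
    grind
  have hcard : 1 < #A := by
    rw [hA, card_erase_of_mem (by simp [hx])]
    omega
  have hne : A.Nonempty := card_pos.1 (by omega)
  set y := A.min' hne
  obtain ⟨hyU, hxy, -⟩ := (mem_A y).1 (A.min'_mem hne)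
  obtain ⟨z, hzA, hzy⟩ := exists_mem_ne hcard y
  have hyz : y < z := lt_of_le_of_ne (A.min'_le z hzA) hzy.symm
  obtain ⟨hzU, -, hzs⟩ := (mem_A z).1 hzA
  have hsucc (v : ℕ) (hvU : v ∈ U) (hxv : x < v) : y ≤ v := by
    by_contra! hvy
    exact hvy.not_ge (A.min'_le v ((mem_A v).2 ⟨hvU, hxv, by omega⟩))
  have hadd : x + (y - x) = y := Nat.add_sub_of_le hxy.le
  refine ⟨y - x, mem_Icc.2 (by omega), ?_⟩
  simp only [pairStarts, mem_filter, hadd]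
  exact ⟨hx, hyU, hsucc, z, hzU, hyz, by omega⟩

theorem exists_separated_seq_mem_pairStarts (hcard : 2 * k - 1 ≤ #(pairStarts U s ℓ)) :
    ∃ b : ℕ → ℕ, (∀ j < k, b j ∈ pairStarts U s ℓ) ∧ ∀ j, j + 1 < k → b j + ℓ < b (j + 1) := by
  set T := pairStarts U s ℓ
  have hfin : {x | x ∈ T}.Finite := T.finite_toSet
  have hfin_card : #hfin.toFinset = #T := congrArg card T.finite_toSet_toFinset
  set c := Nat.nth (· ∈ T)
  have hcT (i : ℕ) (hi : i < 2 * k - 1) : c i ∈ T :=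
    Nat.nth_mem_of_lt_card hfin (by rw [hfin_card]; omega)
  have hc_lt (i : ℕ) (hi : i + 1 < 2 * k - 1) : c i < c (i + 1) :=
    Nat.nth_lt_nth_of_lt_card hfin i.lt_succ_self (by rw [hfin_card]; omega)
  refine ⟨fun j ↦ c (2 * j), fun j hj ↦ hcT _ (by omega), fun j hj ↦ ?_⟩
  -- Skipping `c (2 * j + 1)` makes room for the pair `c (2 * j)`, `c (2 * j) + ℓ`.
  have hsucc : ∀ y ∈ U, c (2 * j) < y → c (2 * j) + ℓ ≤ y :=
    (mem_filter.1 (hcT (2 * j) (by omega))).2.2.1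
  calc c (2 * j) + ℓ ≤ c (2 * j + 1) :=
        hsucc _ (mem_filter.1 (hcT _ (by omega))).1 (hc_lt _ (by omega))
    _ < c (2 * (j + 1)) := hc_lt _ (by omega)

theorem exists_famOdd_subset_of_le_card_pairStarts (hU : U ⊆ Icc 1 n) (hk : 1 ≤ k) (hℓ : 1 ≤ ℓ)
    (hℓs : ℓ ≤ s) (hcard : 2 * k - 1 ≤ #(pairStarts U s ℓ)) : ∃ e ⊆ U, FamOdd n k s e := by
  obtain ⟨b, hb_mem, hb_lt⟩ := exists_separated_seq_mem_pairStarts hcard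
  have hb (j : ℕ) (hj : j < k) := mem_filter.1 (hb_mem j hj)
  obtain ⟨z, hzU, hz_lt, hz_le⟩ := (hb (k - 1) (by omega)).2.2.2
  set a : ℕ → ℕ := fun j ↦ if j < k then b j else z
  have ha_of_lt (j : ℕ) (hj : j < k) : a j = b j := if_pos hj
  have ha_last : a k = z := if_neg k.lt_irrefl
  refine exists_famOdd_subset_of_pairs (a := a) hU hk hℓ hℓs ?_ ?_ ?_ ?_
  · intro j hj
    rw [ha_of_lt j hj]
    obtain hj' | rfl : j + 1 < k ∨ k = j + 1 := by omega
    · rw [ha_of_lt _ hj']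
      exact hb_lt j hj'
    · rwa [ha_last]
  · intro j hj
    obtain hj | rfl := hj.lt_or_eq
    · rw [ha_of_lt j hj]
      exact (hb j hj).1
    · rwa [ha_last]
  · intro j hj
    rw [ha_of_lt j hj]
    exact (hb j hj).2.1
  · rwa [ha_last, ha_of_lt _ (by omega)]

theorem card_le_card_sparsePoints_add {c : ℕ} (hc : ∀ ℓ ∈ Icc 1 s, #(pairStarts U s ℓ) ≤ c) :
    #U ≤ #(sparsePoints U (s + 2) 2) + s * c := by
  have hcover : U ⊆ sparsePoints U (s + 2) 2 ∪ (Icc 1 s).biUnion (pairStarts U s) := by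
    intro x hx
    obtain hsparse | hcrowded := le_or_gt #(U ∩ Ico x (x + (s + 2))) 2
    · exact mem_union_left _ (mem_filter.2 ⟨hx, hsparse⟩)
    · exact mem_union_right _ (mem_biUnion.2 (exists_mem_pairStarts hx hcrowded))
  calc #U ≤ #(sparsePoints U (s + 2) 2 ∪ (Icc 1 s).biUnion (pairStarts U s)) := card_le_card hcover
    _ ≤ #(sparsePoints U (s + 2) 2) + #((Icc 1 s).biUnion (pairStarts U s)) := card_union_le _ _
    _ ≤ #(sparsePoints U (s + 2) 2) + s * c := by
      gcongr
      simpa using card_biUnion_le_card_mul (Icc 1 s) (pairStarts U s) c hc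

theorem card_mul_le_of_forall_not_famOdd (hk : 1 ≤ k) (hs : 1 ≤ s) (hU : U ⊆ Icc 1 n)
    (hfree : ∀ e ⊆ U, ¬FamOdd n k s e) : #U * (s + 2) ≤ 2 * n + 2 * k * s * (s + 2) := by
  have hstarts : ∀ ℓ ∈ Icc 1 s, #(pairStarts U s ℓ) ≤ 2 * (k - 1) := by
    intro ℓ hℓ
    by_contra! hcard
    obtain ⟨hℓ, hℓs⟩ := mem_Icc.1 hℓ
    obtain ⟨e, heU, he⟩ :=
      exists_famOdd_subset_of_le_card_pairStarts hU hk hℓ hℓs (by omega : 2 * k - 1 ≤ _)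
    exact hfree e heU he
  have hsparse := card_sparsePoints_mul_le hU (s + 2) 2
  have hsplit := card_le_card_sparsePoints_add hstarts
  obtain ⟨k, rfl⟩ := Nat.exists_eq_add_of_le' hk
  simp only [Nat.add_sub_cancel, Nat.add_succ_sub_one] at hsparse hsplit
  nlinarith

end PairStarts

theorem stmt_4 (k s n : ℕ) (hk : 1 ≤ k) (hs : 1 ≤ s) (hn : 0 < n)
    (S : Finset ℕ) (hS : S ⊆ Finset.Icc 1 n)
    (hT : ∀ e : Finset ℕ, FamOdd n k s e → (S ∩ e).Nonempty) :
    (n : ℝ) * (1 - 2 / ((s : ℝ) + 2)) - 2 * (k : ℝ) * (s : ℝ) ≤ (S.card : ℝ) := by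
  set U := Icc 1 n \ S
  have hfree : ∀ e ⊆ U, ¬FamOdd n k s e := fun e heU he ↦ by
    obtain ⟨x, hx⟩ := hT e he
    exact (mem_sdiff.1 (heU (mem_inter.1 hx).2)).2 (mem_inter.1 hx).1
  have hbound : (#U : ℝ) * (s + 2) ≤ 2 * n + 2 * k * s * (s + 2) := mod_cast
    card_mul_le_of_forall_not_famOdd hk hs sdiff_subset hfree
  have hcard : (#U : ℝ) + #S = n := mod_cast
    (card_sdiff_add_card_eq_card hS).trans (by simp)
  have hU : (#U : ℝ) ≤ n * (2 / (s + 2)) + 2 * k * s :=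
    calc (#U : ℝ) ≤ (2 * n + 2 * k * s * (s + 2)) / (s + 2) :=
          (le_div_iff₀ (by positivity)).2 hbound
      _ = n * (2 / (s + 2)) + 2 * k * s := by field_simp
  linarith
end

section
/- Let k ≥ 1 and s ≥ 1 be integers and let n be a positive integer. Then the set [n] \ {j ∈ [n] : (s+1) divides j} is a transversal of F^{n,2k}_s and also a transversal of F^{n,2k+1}_s; consequently T(F^{n,2k}_s) ≤ n − ⌊n/(s+1)⌋ and T(F^{n,2k+1}_s) ≤ n − ⌊n/(s+1)⌋. -/
/-- The transversal number of `F^{n,2k}_s`. -/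
noncomputable def famTransNumEven (n k s : ℕ) : ℕ :=
  sInf {c : ℕ | ∃ S : Finset ℕ, S ⊆ Finset.Icc 1 n ∧
    (∀ e, FamEven n k s e → (S ∩ e).Nonempty) ∧ S.card = c}

/-- The transversal number of `F^{n,2k+1}_s`. -/
noncomputable def famTransNumOdd (n k s : ℕ) : ℕ :=
  sInf {c : ℕ | ∃ S : Finset ℕ, S ⊆ Finset.Icc 1 n ∧
    (∀ e, FamOdd n k s e → (S ∩ e).Nonempty) ∧ S.card = c}

/-!
Since `k ≥ 1`, every edge contains a pair whose difference lies between `1` and `s`, so `s + 1`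
cannot divide both of its elements, and the other one lies in the proposed transversal. An odd
edge without its largest element is an even edge, so a transversal of the even family is one of
the odd family.
-/

open Finset

theorem not_dvd_or_not_dvd_of_sub_lt {a b d : ℕ} (hpos : 0 < b - a) (hlt : b - a < d) :
    ¬ d ∣ a ∨ ¬ d ∣ b := by
  by_contra! ⟨ha, hb⟩
  exact Nat.not_dvd_of_pos_of_lt hpos hlt (Nat.dvd_sub hb ha)

theorem filter_not_dvd_inter_nonempty_of_sub_lt {A e : Finset ℕ} {a b d : ℕ} (heA : e ⊆ A)
    (ha : a ∈ e) (hb : b ∈ e) (hpos : 0 < b - a) (hlt : b - a < d) :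
    ({j ∈ A | ¬ d ∣ j} ∩ e).Nonempty := by
  obtain hda | hdb := not_dvd_or_not_dvd_of_sub_lt hpos hlt
  · exact ⟨a, mem_inter.2 ⟨mem_filter.2 ⟨heA ha, hda⟩, ha⟩⟩
  · exact ⟨b, mem_inter.2 ⟨mem_filter.2 ⟨heA hb, hdb⟩, hb⟩⟩

theorem card_Icc_filter_not_dvd (n d : ℕ) : #{j ∈ Icc 1 n | ¬ d ∣ j} = n - n / d := by
  have card_multiples : #{j ∈ Icc 1 n | d ∣ j} = n / d := Nat.Ioc_filter_dvd_card_eq_div n d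
  have card_add_card := card_filter_add_card_filter_not (s := Icc 1 n) (d ∣ ·)
  rw [card_multiples, Nat.card_Icc, Nat.add_sub_cancel] at card_add_card
  exact Nat.eq_sub_of_add_eq' card_add_card

section Families

variable {n k s : ℕ} {e S : Finset ℕ}

theorem FamEven.subset_Icc (he : FamEven n k s e) : e ⊆ Icc 1 n := by
  obtain ⟨i, -, hi, rfl, -⟩ := he
  exact image_subset_iff.2 fun j _ ↦ hi j

theorem FamEven.exists_sub_pos_le (he : FamEven n k s e) (hk : 0 < k) :
    ∃ a ∈ e, ∃ b ∈ e, 0 < b - a ∧ b - a ≤ s := by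
  obtain ⟨i, -, -, rfl, ℓ, hℓ, hℓs, hgap⟩ := he
  have first_gap : i ⟨1, by lia⟩ - i ⟨0, by lia⟩ = ℓ := hgap ⟨0, hk⟩
  exact ⟨_, mem_image_of_mem i (mem_univ _), _, mem_image_of_mem i (mem_univ _),
    first_gap ▸ hℓ, first_gap ▸ hℓs⟩

theorem FamEven.filter_not_dvd_inter_nonempty (he : FamEven n k s e) (hk : 0 < k) :
    ({j ∈ Icc 1 n | ¬ (s + 1) ∣ j} ∩ e).Nonempty := by
  obtain ⟨a, ha, b, hb, hpos, hle⟩ := he.exists_sub_pos_le hk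
  exact filter_not_dvd_inter_nonempty_of_sub_lt he.subset_Icc ha hb hpos (Nat.lt_succ_of_le hle)

theorem FamOdd.exists_famEven_subset (he : FamOdd n k s e) : ∃ e' ⊆ e, FamEven n k s e' := by
  obtain ⟨i, hmono, hi, rfl, -, ℓ, hℓ, hℓs, hgap⟩ := he
  refine ⟨image (i ∘ Fin.castSucc) univ, ?_, i ∘ Fin.castSucc,
    hmono.comp Fin.strictMono_castSucc, fun j ↦ hi j.castSucc, rfl, ℓ, hℓ, hℓs, hgap⟩
  exact image_subset_iff.2 fun j _ ↦ mem_image_of_mem i (mem_univ j.castSucc)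

theorem FamOdd.inter_nonempty_of_forall_famEven (he : FamOdd n k s e)
    (hS : ∀ e', FamEven n k s e' → (S ∩ e').Nonempty) : (S ∩ e).Nonempty := by
  obtain ⟨e', hsub, he'⟩ := he.exists_famEven_subset
  exact (hS e' he').mono (inter_subset_inter_left hsub)

theorem famTransNumEven_le_card (hSn : S ⊆ Icc 1 n)
    (hS : ∀ e, FamEven n k s e → (S ∩ e).Nonempty) : famTransNumEven n k s ≤ #S :=
  Nat.sInf_le ⟨S, hSn, hS, rfl⟩

theorem famTransNumOdd_le_card (hSn : S ⊆ Icc 1 n)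
    (hS : ∀ e, FamOdd n k s e → (S ∩ e).Nonempty) : famTransNumOdd n k s ≤ #S :=
  Nat.sInf_le ⟨S, hSn, hS, rfl⟩

end Families

theorem stmt_5 (k s n : ℕ) (hk : 1 ≤ k) (hs : 1 ≤ s) (hn : 0 < n) :
    (∀ e, FamEven n k s e →
      ((((Finset.Icc 1 n).filter fun j => ¬ (s + 1) ∣ j)) ∩ e).Nonempty) ∧
    (∀ e, FamOdd n k s e →
      ((((Finset.Icc 1 n).filter fun j => ¬ (s + 1) ∣ j)) ∩ e).Nonempty) ∧
    famTransNumEven n k s ≤ n - n / (s + 1) ∧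
    famTransNumOdd n k s ≤ n - n / (s + 1) := by
  have meets_even : ∀ e, FamEven n k s e → ({j ∈ Icc 1 n | ¬ (s + 1) ∣ j} ∩ e).Nonempty :=
    fun e he ↦ he.filter_not_dvd_inter_nonempty hk
  have meets_odd : ∀ e, FamOdd n k s e → ({j ∈ Icc 1 n | ¬ (s + 1) ∣ j} ∩ e).Nonempty :=
    fun e he ↦ he.inter_nonempty_of_forall_famEven meets_even
  rw [← card_Icc_filter_not_dvd n (s + 1)]
  exact ⟨meets_even, meets_odd, famTransNumEven_le_card (filter_subset _ _) meets_even,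
    famTransNumOdd_le_card (filter_subset _ _) meets_odd⟩
end

section
/- Let k ≥ 2 and s ≥ 1 be integers, and let a, n be positive integers with a dividing n. Then every (2k−1)-element subset of [n] is contained in at most two members of the family H^n_{a,s}; in other words, the pure (2k−1)-dimensional complex generated by H^n_{a,s} is a pseudomanifold. -/
/-- Membership in the family `H^n_{a,s}` (with `k` pairs): `e` consists of `k` pairs
`{i_j, i_j + ℓ}` with `1 ≤ ℓ ≤ s`, where the `j`-th pair lies in the interval
`I_{b_j} = {(b_j - 1)·(n/a) + 1, …, b_j·(n/a)}` and `b_1 < b_2 < … < b_k` in `[a]`. -/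
def HFam (n a s k : ℕ) (e : Finset ℕ) : Prop :=
  ∃ ℓ, 1 ≤ ℓ ∧ ℓ ≤ s ∧
    ∃ i b : Fin k → ℕ,
      StrictMono b ∧ (∀ j, 1 ≤ b j ∧ b j ≤ a) ∧
      (∀ j, (b j - 1) * (n / a) + 1 ≤ i j ∧ i j + ℓ ≤ b j * (n / a)) ∧
      e = Finset.univ.biUnion fun j => {i j, i j + ℓ}

/-! Colour every point of `[n]` by the interval containing it: a member of the family meets each
colour in a pair `{i, i + ℓ}` or not at all. When a point `v` is removed, its former partner `x` is
the only point left alone in its colour, so `x` is determined by the remaining set `G`. Since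
`k ≥ 2`, `G` still contains a full pair, which determines `ℓ`. Hence `v` can only be `x + ℓ` or
`x - ℓ`. -/

section DifferBy

variable {α : Type*} [AddMonoid α] {ℓ ℓ' x y u v w : α}

/-- The relation `y = x ± ℓ`, written without subtraction: `x` and `y` are, in some order, the two
points of a pair `{i, i + ℓ}`. -/
def DifferBy (ℓ x y : α) : Prop := x + ℓ = y ∨ y + ℓ = x

theorem DifferBy.symm (h : DifferBy ℓ x y) : DifferBy ℓ y x := Or.symm h

theorem DifferBy.eq_or_add_eq_zero [IsLeftCancelAdd α] (h : DifferBy ℓ x y)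
    (h' : DifferBy ℓ' x y) : ℓ = ℓ' ∨ ℓ + ℓ' = 0 := by
  have opposite {p q : α} (hpq : p + ℓ = q) (hqp : q + ℓ' = p) : ℓ + ℓ' = 0 :=
    add_eq_left.mp (by rw [← add_assoc, hpq, hqp])
  rcases h with h | h <;> rcases h' with h' | h'
  · exact .inl (add_left_cancel (h.trans h'.symm))
  · exact .inr (opposite h h')
  · exact .inr (opposite h h')
  · exact .inl (add_left_cancel (h.trans h'.symm))

/-- A pair determines its shift only up to sign, but that is all `DifferBy` depends on. -/
theorem DifferBy.of_common_pair [IsLeftCancelAdd α] (h : DifferBy ℓ x y) (h' : DifferBy ℓ' x y)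
    (huv : DifferBy ℓ u v) : DifferBy ℓ' u v := by
  rcases h.eq_or_add_eq_zero h' with rfl | hzero
  · exact huv
  · rcases huv with rfl | rfl
    · exact .inr (by rw [add_assoc, hzero, add_zero])
    · exact .inl (by rw [add_assoc, hzero, add_zero])

theorem DifferBy.eq_or_eq_or_eq [IsRightCancelAdd α] (hu : DifferBy ℓ x u) (hv : DifferBy ℓ x v)
    (hw : DifferBy ℓ x w) : u = v ∨ u = w ∨ v = w := by
  have eq_of_add_eq {p q : α} (hp : p + ℓ = x) (hq : q + ℓ = x) : p = q :=
    add_right_cancel (hp.trans hq.symm)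
  unfold DifferBy at hu hv hw
  grind

end DifferBy

section IsPairSystem

variable {α β : Type*} [AddMonoid α] {c : α → β} {ℓ : α} {e G : Set α} {x y : α}

/-- Every nonempty colour class of `e` under the colouring `c` is a pair `{i, i + ℓ}` with the same
nonzero shift `ℓ`. -/
def IsPairSystem (c : α → β) (ℓ : α) (e : Set α) : Prop :=
  ℓ ≠ 0 ∧ ∀ x ∈ e, ∃ i, {y ∈ e | c y = c x} = {i, i + ℓ}

/-- The point `x` of `G` is the only one of its colour: it has lost its partner. -/
def IsUnpaired (c : α → β) (G : Set α) (x : α) : Prop :=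
  x ∈ G ∧ ∀ y ∈ G, c y = c x → y = x

theorem isPairSystem_iUnion {ι : Type*} {i : ι → α} (hℓ : ℓ ≠ 0)
    (hinj : Function.Injective (c ∘ i)) (hc : ∀ j, c (i j + ℓ) = c (i j)) :
    IsPairSystem c ℓ (⋃ j, {i j, i j + ℓ}) := by
  have color_eq {j y} (hy : y = i j ∨ y = i j + ℓ) : c y = c (i j) := by
    rcases hy with rfl | rfl
    exacts [rfl, hc j]
  refine ⟨hℓ, fun x hx => ?_⟩
  simp only [Set.mem_iUnion, Set.mem_insert_iff, Set.mem_singleton_iff] at hx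
  obtain ⟨j, hxj⟩ := hx
  refine ⟨i j, Set.ext fun y => ?_⟩
  simp only [Set.mem_ofPred_eq, Set.mem_iUnion, Set.mem_insert_iff, Set.mem_singleton_iff]
  constructor
  · rintro ⟨⟨j', hyj'⟩, hyx⟩
    obtain rfl : j' = j := hinj ((color_eq hyj').symm.trans (hyx.trans (color_eq hxj)))
    exact hyj'
  · exact fun hyj => ⟨⟨j, hyj⟩, (color_eq hyj).trans (color_eq hxj).symm⟩

namespace IsPairSystem

theorem exists_partner [IsLeftCancelAdd α] (h : IsPairSystem c ℓ e) (hx : x ∈ e) :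
    ∃ y, y ≠ x ∧ DifferBy ℓ x y ∧ ∀ z, z ∈ e ∧ c z = c x ↔ z = x ∨ z = y := by
  obtain ⟨hℓ, hclass⟩ := h
  obtain ⟨i, hi⟩ := hclass x hx
  have mem_class (z : α) : z ∈ e ∧ c z = c x ↔ z = i ∨ z = i + ℓ := by
    simpa using Set.ext_iff.mp hi z
  have shift_ne : i + ℓ ≠ i := fun h => hℓ (add_eq_left.mp h)
  rcases (mem_class x).mp ⟨hx, rfl⟩ with rfl | rfl
  · exact ⟨x + ℓ, shift_ne, .inl rfl, mem_class⟩
  · exact ⟨i, shift_ne.symm, .inr rfl, fun z => (mem_class z).trans or_comm⟩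

theorem differBy [IsLeftCancelAdd α] (h : IsPairSystem c ℓ e) (hx : x ∈ e) (hy : y ∈ e)
    (hne : y ≠ x) (hc : c y = c x) : DifferBy ℓ x y := by
  obtain ⟨z, -, hz, hclass⟩ := h.exists_partner hx
  obtain rfl : y = z := ((hclass y).mp ⟨hy, hc⟩).resolve_left hne
  exact hz

theorem exists_isUnpaired_of_covBy [IsLeftCancelAdd α] (h : IsPairSystem c ℓ e) (hG : G ⋖ e) :
    ∃ x v, IsUnpaired c G x ∧ DifferBy ℓ x v ∧ insert v G = e := by
  obtain ⟨v, hv, rfl⟩ := Set.covBy_iff_exists_insert.mp hG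
  obtain ⟨x, hne, hdiff, hclass⟩ := h.exists_partner (Set.mem_insert v G)
  obtain ⟨hx, hcx⟩ := (hclass x).mpr (.inr rfl)
  refine ⟨x, v, ⟨hx.resolve_left hne, fun y hy hyx => ?_⟩, hdiff.symm, rfl⟩
  exact ((hclass y).mp ⟨.inr hy, hyx.trans hcx⟩).resolve_left (ne_of_mem_of_not_mem hy hv)

/-- Both unpaired points must have the removed point of `e` as their partner. -/
theorem isUnpaired_unique [IsLeftCancelAdd α] (h : IsPairSystem c ℓ e) (hG : G ⋖ e)
    (hx : IsUnpaired c G x) (hy : IsUnpaired c G y) : x = y := by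
  obtain ⟨v, -, rfl⟩ := Set.covBy_iff_exists_insert.mp hG
  have color_removed {z : α} (hz : IsUnpaired c G z) : c v = c z := by
    obtain ⟨w, hne, -, hclass⟩ := h.exists_partner (.inr hz.1)
    obtain ⟨hw, hcw⟩ := (hclass w).mpr (.inr rfl)
    obtain rfl : w = v := hw.resolve_right fun hwG => hne (hz.2 w hwG hcw)
    exact hcw
  exact hy.2 x hx.1 ((color_removed hx).symm.trans (color_removed hy))

theorem exists_pair_of_covBy [IsLeftCancelAdd α] (h : IsPairSystem c ℓ e) (hG : G ⋖ e)
    (hG₂ : G.Nontrivial) : ∃ p ∈ G, ∃ q ∈ G, q ≠ p ∧ c q = c p := by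
  by_contra! hlone
  have unpaired {p : α} (hp : p ∈ G) : IsUnpaired c G p :=
    ⟨hp, fun q hq hqp => by_contra fun hne => hlone p hp q hq hne hqp⟩
  obtain ⟨p, hp, q, hq, hne⟩ := hG₂
  exact hne (h.isUnpaired_unique hG (unpaired hp) (unpaired hq))

end IsPairSystem

end IsPairSystem

theorem card_biUnion_pair {α β ι : Type*} [AddMonoid α] [IsLeftCancelAdd α] [DecidableEq α]
    [Fintype ι] {c : α → β} {ℓ : α} {i : ι → α} (hℓ : ℓ ≠ 0)
    (hinj : Function.Injective (c ∘ i)) (hc : ∀ j, c (i j + ℓ) = c (i j)) :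
    (Finset.univ.biUnion fun j => {i j, i j + ℓ}).card = 2 * Fintype.card ι := by
  have disjoint_pairs : Pairwise fun j j' =>
      Disjoint ({i j, i j + ℓ} : Finset α) {i j', i j' + ℓ} := by
    intro j j' hne
    have color_ne : c (i j) ≠ c (i j') := hinj.ne hne
    simp only [Finset.disjoint_left, Finset.mem_insert, Finset.mem_singleton]
    grind
  have card_pair (j : ι) : ({i j, i j + ℓ} : Finset α).card = 2 :=
    Finset.card_pair fun h => hℓ (add_eq_left.mp h.symm)
  rw [Finset.card_biUnion fun j _ j' _ hne => disjoint_pairs hne]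
  simp [card_pair, mul_comm]

theorem ceilDiv_eq_of_mem_block {m b x : ℕ} (hlow : (b - 1) * m + 1 ≤ x) (hup : x ≤ b * m) :
    x ⌈/⌉ m = b := by
  have hm : 0 < m := Nat.pos_of_ne_zero <| by
    rintro rfl
    omega
  refine le_antisymm ((ceilDiv_le_iff_le_mul hm).mpr (by rwa [mul_comm])) ?_
  by_contra! hlt
  have hle : x ≤ m * (b - 1) := (ceilDiv_le_iff_le_mul hm).mp (by omega)
  rw [mul_comm] at hle
  omega

namespace HFam

variable {n a s k : ℕ} {e G : Finset ℕ}

theorem exists_pairs (h : HFam n a s k e) :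
    ∃ ℓ ≠ 0, ∃ i : Fin k → ℕ, Function.Injective ((· ⌈/⌉ (n / a)) ∘ i) ∧
      (∀ j, (i j + ℓ) ⌈/⌉ (n / a) = i j ⌈/⌉ (n / a)) ∧
      e = Finset.univ.biUnion fun j => {i j, i j + ℓ} := by
  obtain ⟨ℓ, hℓ, -, i, b, hb, -, hi, rfl⟩ := h
  have block_left (j : Fin k) : i j ⌈/⌉ (n / a) = b j :=
    ceilDiv_eq_of_mem_block (hi j).1 (by linarith [(hi j).2])
  have block_right (j : Fin k) : (i j + ℓ) ⌈/⌉ (n / a) = b j :=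
    ceilDiv_eq_of_mem_block (by linarith [(hi j).1]) (hi j).2
  have block_comp : (· ⌈/⌉ (n / a)) ∘ i = b := funext block_left
  exact ⟨ℓ, by omega, i, block_comp ▸ hb.injective,
    fun j => (block_right j).trans (block_left j).symm, rfl⟩

theorem exists_isPairSystem (h : HFam n a s k e) :
    ∃ ℓ, IsPairSystem (· ⌈/⌉ (n / a)) ℓ (e : Set ℕ) := by
  obtain ⟨ℓ, hℓ, i, hinj, hc, rfl⟩ := h.exists_pairs
  exact ⟨ℓ, by simpa using isPairSystem_iUnion hℓ hinj hc⟩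

theorem card_eq (h : HFam n a s k e) : e.card = 2 * k := by
  obtain ⟨ℓ, hℓ, i, hinj, hc, rfl⟩ := h.exists_pairs
  simpa using card_biUnion_pair hℓ hinj hc

theorem covBy (h : HFam n a s k e) (hcard : G.card + 1 = 2 * k) (hG : G ⊆ e) :
    (G : Set ℕ) ⋖ e := by
  refine Finset.coe_covBy_coe.mpr (Finset.covBy_iff_card_sdiff_eq_one.mpr ⟨hG, ?_⟩)
  rw [Finset.card_sdiff_of_subset hG, h.card_eq]
  omega

end HFam

theorem stmt_7_general {α β : Type*} [AddMonoid α] [IsCancelAdd α] {c : α → β}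
    {G e₁ e₂ e₃ : Set α} (hG : G.Nontrivial) (h₁ : ∃ ℓ, IsPairSystem c ℓ e₁)
    (h₂ : ∃ ℓ, IsPairSystem c ℓ e₂) (h₃ : ∃ ℓ, IsPairSystem c ℓ e₃) (hG₁ : G ⋖ e₁) (hG₂ : G ⋖ e₂)
    (hG₃ : G ⋖ e₃) : e₁ = e₂ ∨ e₁ = e₃ ∨ e₂ = e₃ := by
  obtain ⟨ℓ₁, h₁⟩ := h₁
  obtain ⟨p, hp, q, hq, hne, hc⟩ := h₁.exists_pair_of_covBy hG₁ hG
  obtain ⟨x, v₁, hx, hv₁, rfl⟩ := h₁.exists_isUnpaired_of_covBy hG₁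
  have removed_differBy {e : Set α} (he : ∃ ℓ, IsPairSystem c ℓ e) (hGe : G ⋖ e) :
      ∃ v, DifferBy ℓ₁ x v ∧ insert v G = e := by
    obtain ⟨ℓ, h⟩ := he
    obtain ⟨y, v, hy, hv, hins⟩ := h.exists_isUnpaired_of_covBy hGe
    obtain rfl := h.isUnpaired_unique hGe hx hy
    have hpq : DifferBy ℓ p q := h.differBy (hGe.le hp) (hGe.le hq) hne hc
    have hpq₁ : DifferBy ℓ₁ p q := h₁.differBy (hG₁.le hp) (hG₁.le hq) hne hc
    exact ⟨v, hpq.of_common_pair hpq₁ hv, hins⟩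
  obtain ⟨v₂, hv₂, rfl⟩ := removed_differBy h₂ hG₂
  obtain ⟨v₃, hv₃, rfl⟩ := removed_differBy h₃ hG₃
  rcases hv₁.eq_or_eq_or_eq hv₂ hv₃ with rfl | rfl | rfl <;> simp

theorem stmt_7 (k s a n : ℕ) (hk : 2 ≤ k) (hs : 1 ≤ s) (ha : 0 < a) (hn : 0 < n)
    (hdvd : a ∣ n) (G : Finset ℕ) (hG : G ⊆ Finset.Icc 1 n)
    (hGcard : G.card = 2 * k - 1) :
    ∀ e₁ e₂ e₃ : Finset ℕ, HFam n a s k e₁ → HFam n a s k e₂ → HFam n a s k e₃ →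
      G ⊆ e₁ → G ⊆ e₂ → G ⊆ e₃ → e₁ = e₂ ∨ e₁ = e₃ ∨ e₂ = e₃ := by
  intro e₁ e₂ e₃ h₁ h₂ h₃ hG₁ hG₂ hG₃
  have hnontriv : G.Nontrivial := Finset.one_lt_card_iff_nontrivial.mp (by omega)
  have hcard : G.card + 1 = 2 * k := by omega
  exact_mod_cast stmt_7_general hnontriv h₁.exists_isPairSystem h₂.exists_isPairSystem
    h₃.exists_isPairSystem (h₁.covBy hcard hG₁) (h₂.covBy hcard hG₂) (h₃.covBy hcard hG₃)
end
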